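/- arXiv:1611.09338 — 3 statements merged into one kernel-verified Lean document; each statement's English description precedes it below -/
import Mathlib

section
/- Let a : ℕ → ℂ be a sequence bounded by 1 that admits correlations for Cesàro averages on intervals I = (I_N) with |I_N| → ∞, and suppose the induced Furstenberg system is ergodic (equivalently, the identity lim_{H} 𝔼_{h∈[H]}(𝔼_{m∈I} b(m+h)c(m)) = 𝔼_{m∈I}b(m)·𝔼_{m∈I}c(m) holds for all finite products b, c of shifts of a and conj(a)). Then for every s ≥ 2, ‖a‖_{U^s(I)}^{2^s} = 𝔼_{h∈ℕ^{s-1}} |𝔼_{n∈I} ∏_{ε∈{0,1}^{s-1}} C^{|ε|} a(n + ε·h)|², where C denotes complex conjugation applied |ε| times. -/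
open Filter Finset Topology

/-- `ε · h`. -/
def epsDot {s : ℕ} (ε : Fin s → Bool) (h : Fin s → ℕ) : ℕ := ∑ j, if ε j then h j else 0

/-- The Gowers cube product `∏_{ε∈{0,1}^s} C^{|ε|} a(n + ε·h)`. -/
noncomputable def cubeProd (a : ℕ → ℂ) {s : ℕ} (h : Fin s → ℕ) (n : ℕ) : ℂ :=
  ∏ ε : Fin s → Bool,
    if (Finset.univ.filter fun j => ε j = true).card % 2 = 1 then
      (starRingEnd ℂ) (a (n + epsDot ε h))
    else a (n + epsDot ε h)

/-- Cesàro average of `f` over the interval `I N`. -/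
noncomputable def cesaroAvg (I : ℕ → Finset ℕ) (f : ℕ → ℂ) (N : ℕ) : ℂ :=
  ((I N).card : ℂ)⁻¹ * ∑ n ∈ I N, f n

/-- A finite product of shifts of `a` and `conj a`. -/
noncomputable def prodShift (a : ℕ → ℂ) {k : ℕ} (sh : Fin k → ℕ) (cj : Fin k → Bool)
    (m : ℕ) : ℂ :=
  ∏ j, if cj j then (starRingEnd ℂ) (a (m + sh j)) else a (m + sh j)

/-!
In each variable of the cube, the Fejér mean of order `K` of the correlations
`𝔼_n F(n) conj F(n + k)` is the mean of `|𝔼_{x < K} F(n + x)|²` over `n`. Splitting an average of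
length `m K` into `m` blocks of length `K`, convexity shows that it does not increase when `K` is
replaced by `m K`. Hence the multidimensional Fejér means of the cube correlations converge as all
orders tend to infinity independently, and a Tauberian argument, one variable at a time, transfers
this to uniform averages over boxes. The limit over cubic boxes is therefore also the limit taken
with the first side tending to infinity before the others, and ergodicity evaluates that inner limit
as `|𝔼_n ∏_ε C^{|ε|} a(n + ε·h)|²`.
-/

open scoped BigOperators ComplexConjugate

section Expect

lemma abs_expect_le_of_abs_le {ι : Type*} {S : Finset ι} {f : ι → ℝ} {C : ℝ} (hC : 0 ≤ C)
    (hf : ∀ x ∈ S, |f x| ≤ C) : |𝔼 x ∈ S, f x| ≤ C := by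
  rcases S.eq_empty_or_nonempty with rfl | hS
  · simpa
  · exact (abs_expect_le _ _).trans (expect_le hS hf)

lemma sq_norm_expect_le {ι 𝕜 : Type*} [RCLike 𝕜] (S : Finset ι) (f : ι → 𝕜) :
    ‖𝔼 x ∈ S, f x‖ ^ 2 ≤ 𝔼 x ∈ S, ‖f x‖ ^ 2 := by
  rcases S.eq_empty_or_nonempty with rfl | hS
  · simp
  calc ‖𝔼 x ∈ S, f x‖ ^ 2 ≤ (𝔼 x ∈ S, ‖f x‖) ^ 2 := by gcongr; exact RCLike.norm_expect_le (K := 𝕜)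
    _ ≤ 𝔼 x ∈ S, ‖f x‖ ^ 2 := by
      simpa [expect_const hS] using expect_mul_sq_le_sq_mul_sq S (fun x => ‖f x‖) 1

lemma sq_norm_expect_eq {ι : Type*} (S : Finset ι) (f : ι → ℂ) :
    ‖𝔼 x ∈ S, f x‖ ^ 2 = 𝔼 q ∈ S ×ˢ S, (f q.1 * conj (f q.2)).re := by
  rw [← Complex.re_expect, expect_product' S S fun x y => f x * conj (f y), ← expect_mul_expect,
    ← map_expect, Complex.mul_conj, Complex.ofReal_re, Complex.normSq_eq_norm_sq]

lemma abs_expect_sub_expect_le_of_subset {ι : Type*} {S T : Finset ι} (hST : S ⊆ T)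
    (hS : S.Nonempty) {f : ι → ℝ} {C : ℝ} (hf : ∀ x ∈ T, |f x| ≤ C) :
    |𝔼 x ∈ T, f x - 𝔼 x ∈ S, f x| ≤ 2 * C * (1 - #S / #T) := by
  classical
  set A := 𝔼 x ∈ S, f x with hA
  have hT : (0 : ℝ) < #T := by exact_mod_cast (hS.mono hST).card_pos
  have hC : 0 ≤ C := hS.elim fun x hx => (abs_nonneg _).trans (hf x (hST hx))
  have hAC : |A| ≤ C :=
    abs_expect_le_of_abs_le hC fun x hx => hf x (hST hx)
  have hsum : #T * (𝔼 x ∈ T, f x - A) = ∑ x ∈ T \ S, (f x - A) := by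
    have hSA : ∑ x ∈ S, (f x - A) = 0 := by
      rw [sum_sub_distrib, sum_const, nsmul_eq_mul, hA, card_mul_expect, sub_self]
    rw [mul_sub, card_mul_expect, ← add_zero (∑ x ∈ T \ S, _), ← hSA, sum_sdiff hST,
      sum_sub_distrib, sum_const, nsmul_eq_mul]
  have hbound : |∑ x ∈ T \ S, (f x - A)| ≤ (#T - #S) * (2 * C) := by
    calc |∑ x ∈ T \ S, (f x - A)| ≤ ∑ x ∈ T \ S, |f x - A| := abs_sum_le_sum_abs _ _
      _ ≤ ∑ _x ∈ T \ S, 2 * C := sum_le_sum fun x hx => by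
        linarith [abs_sub (f x) A, hf x (mem_sdiff.1 hx).1]
      _ = (#T - #S) * (2 * C) := by
        rw [sum_const, nsmul_eq_mul, cast_card_sdiff hST]
  rw [← hsum, abs_mul, abs_of_pos hT] at hbound
  calc _ ≤ (#T - #S) * (2 * C) / #T := by rwa [le_div_iff₀' hT]
    _ = 2 * C * (1 - #S / #T) := by field_simp

variable {M : Type*} [AddCommMonoid M] [Module ℚ≥0 M]

lemma expect_range_mul (f : ℕ → M) (m K : ℕ) :
    𝔼 x ∈ range (m * K), f x = 𝔼 j ∈ range m, 𝔼 x ∈ range K, f (j * K + x) := by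
  have hsum : ∑ x ∈ range (m * K), f x = ∑ j ∈ range m, ∑ x ∈ range K, f (j * K + x) := by
    induction m with
    | zero => simp
    | succ m ih => rw [Nat.succ_mul, sum_range_add, ih, sum_range_succ]
  simp only [expect, ← smul_sum, smul_smul, hsum, card_range, Nat.cast_mul, mul_inv]

lemma expect_piFinset_succ {α : Type*} {s : ℕ} (S : Fin (s + 1) → Finset α)
    (f : (Fin (s + 1) → α) → M) :
    𝔼 x ∈ Fintype.piFinset S, f x =
      𝔼 k ∈ S 0, 𝔼 l ∈ Fintype.piFinset (Fin.tail S), f (Fin.cons k l) := by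
  rw [← expect_product']
  exact (expect_equiv (Fin.consEquiv fun _ => α)
    (fun x => by simp [Fin.consEquiv, Fin.forall_fin_succ, Fin.tail]) fun _ _ => rfl).symm

end Expect

section Limits

lemma tendsto_expect {ι κ M : Type*} [AddCommMonoid M] [Module ℚ≥0 M] [TopologicalSpace M]
    [ContinuousAdd M] [ContinuousConstSMul ℚ≥0 M] {l : Filter κ} {S : Finset ι} {f : κ → ι → M}
    {g : ι → M} (h : ∀ i ∈ S, Tendsto (fun x => f x i) l (𝓝 (g i))) :
    Tendsto (fun x => 𝔼 i ∈ S, f x i) l (𝓝 (𝔼 i ∈ S, g i)) := by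
  simp only [expect]
  exact (tendsto_finsetSum S h).const_smul _

lemma tendsto_of_tendsto_prod_of_tendsto {α β X : Type*} [TopologicalSpace X] [RegularSpace X]
    {l : Filter α} {l' : Filter β} [l'.NeBot] {f : α × β → X} {g : α → X} {x : X}
    (hf : Tendsto f (l ×ˢ l') (𝓝 x)) (hg : ∀ a, Tendsto (fun b => f (a, b)) l' (𝓝 (g a))) :
    Tendsto g l (𝓝 x) := by
  refine (closed_nhds_basis x).tendsto_right_iff.2 fun V ⟨hV, hVclosed⟩ => ?_
  filter_upwards [(hf.eventually_mem hV).curry] with a ha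
  exact hVclosed.mem_of_tendsto (hg a) ha

lemma tendsto_apply_atTop {ι : Type*} (i : ι) :
    Tendsto (fun H : ι → ℕ => H i) atTop atTop :=
  (Function.monotone_eval i).tendsto_atTop_atTop fun n => ⟨fun _ => n, le_rfl⟩

lemma tendsto_const_pi_atTop (ι : Type*) [Finite ι] :
    Tendsto (fun (n : ℕ) (_ : ι) => n) atTop atTop :=
  Monotone.tendsto_atTop_atTop (fun _ _ h _ => h) fun H =>
    (Set.finite_range H).bddAbove.imp fun _ hn i => hn (Set.mem_range_self i)

lemma tendsto_fin_tail_atTop (s : ℕ) :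
    Tendsto (fun H : Fin (s + 1) → ℕ => Fin.tail H) atTop atTop :=
  Monotone.tendsto_atTop_atTop (fun _ _ h i => h i.succ) fun H =>
    ⟨Fin.cons 0 H, fun _ => le_rfl⟩

lemma tendsto_fin_cons_atTop {α : Type*} {l : Filter α} {s : ℕ} {k : α → ℕ}
    {H : α → Fin s → ℕ} (hk : Tendsto k l atTop) (hH : Tendsto H l atTop) :
    Tendsto (fun x => (Fin.cons (k x) (H x) : Fin (s + 1) → ℕ)) l atTop :=
  (Fin.consOrderIso fun _ => ℕ).tendsto_atTop.comp
    (prod_atTop_atTop_eq (α := ℕ) (β := Fin s → ℕ) ▸ hk.prodMk hH)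

lemma tendsto_atTop_ciInf_of_mul_le {ι : Type*} {f : (ι → ℕ) → ℝ} (hbdd : BddBelow (Set.range f))
    (hmul : ∀ m H, (∀ i, 0 < m i) → f (m * H) ≤ f H)
    (hround : ∀ H, (∀ i, 0 < H i) → Tendsto (fun H' => f H' - f (H' / H * H)) atTop (𝓝 0)) :
    Tendsto f atTop (𝓝 (⨅ H, f (H + 1))) := by
  have hbdd' : BddBelow (Set.range fun H => f (H + 1)) :=
    hbdd.mono (Set.range_comp_subset_range (· + 1) f)
  refine tendsto_order.2 ⟨fun b hb => ?_, fun b hb => ?_⟩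
  · filter_upwards [eventually_ge_atTop 1] with H hH
    calc b < ⨅ H, f (H + 1) := hb
      _ ≤ f (H - 1 + 1) := ciInf_le hbdd' (H - 1)
      _ = f H := by rw [tsub_add_cancel_of_le hH]
  · obtain ⟨H, hH⟩ := exists_lt_of_ciInf_lt hb
    filter_upwards [(hround (H + 1) fun i => Nat.succ_pos _).eventually_lt_const (sub_pos.2 hH),
      eventually_ge_atTop (H + 1)] with H' hH' hle
    linarith [hmul (H' / (H + 1)) (H + 1) fun i => Nat.div_pos (hle i) (Nat.succ_pos _)]

end Limits

section Fejer

/-- The Fejér mean of `f` of order `K`: the average of `f |x - y|` over `x, y < K`. For the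
correlation sequence `f k = ⟨F, Tᵏ F⟩` of an isometry `T` it is the squared norm of the average of
`F, T F, …, Tᴷ⁻¹ F`. -/
noncomputable def fejerMean (K : ℕ) (f : ℕ → ℝ) : ℝ :=
  𝔼 q ∈ range K ×ˢ range K, f (Nat.dist q.1 q.2)

/-- The multidimensional Fejér mean of `R` with order `H i` in the `i`-th variable. -/
noncomputable def fejerBoxMean {s : ℕ} (H : Fin s → ℕ) (R : (Fin s → ℕ) → ℝ) : ℝ :=
  𝔼 x ∈ Fintype.piFinset fun i => range (H i) ×ˢ range (H i),
    R fun i => Nat.dist (x i).1 (x i).2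

/-- The average of `R` over the box `∏ i, {1, …, H i}`. -/
noncomputable def boxMean {s : ℕ} (H : Fin s → ℕ) (R : (Fin s → ℕ) → ℝ) : ℝ :=
  𝔼 h ∈ Fintype.piFinset fun i => Icc 1 (H i), R h

variable {s : ℕ} {C : ℝ}

lemma fejerBoxMean_succ (H : Fin (s + 1) → ℕ) (R : (Fin (s + 1) → ℕ) → ℝ) :
    fejerBoxMean H R =
      fejerMean (H 0) fun k => fejerBoxMean (Fin.tail H) fun l => R (Fin.cons k l) := by
  rw [fejerBoxMean, expect_piFinset_succ]
  refine expect_congr rfl fun q _ => expect_congr rfl fun x _ => congrArg R ?_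
  ext i
  cases i using Fin.cases <;> rfl

lemma boxMean_succ (H : Fin (s + 1) → ℕ) (R : (Fin (s + 1) → ℕ) → ℝ) :
    boxMean H R = 𝔼 k ∈ Icc 1 (H 0), boxMean (Fin.tail H) fun l => R (Fin.cons k l) :=
  expect_piFinset_succ _ _

lemma boxMean_cons (K : ℕ) (H : Fin s → ℕ) (R : (Fin (s + 1) → ℕ) → ℝ) :
    boxMean (Fin.cons K H : Fin (s + 1) → ℕ) R =
      boxMean H fun l => 𝔼 k ∈ Icc 1 K, R (Fin.cons k l) :=
  (boxMean_succ _ _).trans (expect_comm _ _ _)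

lemma fejerMean_fejerBoxMean_comm (K : ℕ) (H : Fin s → ℕ) (R : ℕ → (Fin s → ℕ) → ℝ) :
    fejerMean K (fun k => fejerBoxMean H (R k)) =
      fejerBoxMean H fun l => fejerMean K fun k => R k l :=
  expect_comm _ _ _

lemma fejerMean_boxMean_comm (K : ℕ) (H : Fin s → ℕ) (R : ℕ → (Fin s → ℕ) → ℝ) :
    fejerMean K (fun k => boxMean H (R k)) = boxMean H fun l => fejerMean K fun k => R k l :=
  expect_comm _ _ _

lemma fejerMean_mono {f g : ℕ → ℝ} (h : ∀ k, f k ≤ g k) (K : ℕ) : fejerMean K f ≤ fejerMean K g :=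
  expect_le_expect fun _ _ => h _

lemma fejerBoxMean_mono {R Q : (Fin s → ℕ) → ℝ} (h : ∀ l, R l ≤ Q l) (H : Fin s → ℕ) :
    fejerBoxMean H R ≤ fejerBoxMean H Q :=
  expect_le_expect fun _ _ => h _

lemma abs_fejerMean_le {f : ℕ → ℝ} (hf : ∀ k, |f k| ≤ C) (K : ℕ) : |fejerMean K f| ≤ C :=
  abs_expect_le_of_abs_le ((abs_nonneg _).trans (hf 0)) fun _ _ => hf _

lemma abs_fejerBoxMean_le {R : (Fin s → ℕ) → ℝ} (hR : ∀ h, |R h| ≤ C) (H : Fin s → ℕ) :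
    |fejerBoxMean H R| ≤ C :=
  abs_expect_le_of_abs_le ((abs_nonneg _).trans (hR 0)) fun _ _ => hR _

lemma abs_boxMean_le {R : (Fin s → ℕ) → ℝ} (hR : ∀ h, |R h| ≤ C) (H : Fin s → ℕ) :
    |boxMean H R| ≤ C :=
  abs_expect_le_of_abs_le ((abs_nonneg _).trans (hR 0)) fun _ _ => hR _

lemma fejerMean_sub_const {K : ℕ} (hK : 0 < K) (f : ℕ → ℝ) (L : ℝ) :
    fejerMean K (fun k => f k - L) = fejerMean K f - L := by
  have hne : (range K ×ˢ range K).Nonempty := by simpa using hK.ne'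
  rw [fejerMean, expect_sub_distrib, expect_const hne, fejerMean]

lemma sum_dist_range_succ (b : ℕ → ℝ) (K : ℕ) :
    ∑ q ∈ range (K + 1) ×ˢ range (K + 1), b (Nat.dist q.1 q.2) =
      ∑ q ∈ range K ×ˢ range K, b (Nat.dist q.1 q.2) + (b 0 + 2 * ∑ k ∈ Icc 1 K, b k) := by
  have hedge : ∑ x ∈ range K, b (Nat.dist x K) = ∑ k ∈ Icc 1 K, b k := by
    refine sum_nbij' (K - ·) (K - ·) ?_ ?_ ?_ ?_ fun x hx => ?_
    case refine_5 => rw [Nat.dist_eq_sub_of_le (mem_range.1 hx).le]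
    all_goals simp only [mem_range, mem_Icc]; omega
  simp only [sum_product, sum_range_succ, sum_add_distrib, Nat.dist_comm K, hedge, Nat.dist_self]
  ring

lemma abs_sum_Icc_sub_le {b : ℕ → ℝ} (hb : ∀ k, |b k| ≤ C) (K J : ℕ) :
    |∑ k ∈ Icc 1 (K + J), b k - ∑ k ∈ Icc 1 K, b k| ≤ C * J := by
  induction J with
  | zero => simp
  | succ J ih =>
    rw [← add_assoc, sum_Icc_succ_top (by omega), add_sub_right_comm]
    push_cast
    linarith [abs_add_le (∑ k ∈ Icc 1 (K + J), b k - ∑ k ∈ Icc 1 K, b k) (b (K + J + 1)),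
      hb (K + J + 1)]

-- The square `[0, K + J)²` minus `[0, K)²` is a union of `J` L-shaped layers, on each of which
-- `b |x - y|` sums to about twice the sum of `b` over `[1, K]`.
lemma abs_sum_dist_range_add_sub_le {b : ℕ → ℝ} (hb : ∀ k, |b k| ≤ C) (K J : ℕ) :
    |∑ q ∈ range (K + J) ×ˢ range (K + J), b (Nat.dist q.1 q.2) -
      ∑ q ∈ range K ×ˢ range K, b (Nat.dist q.1 q.2) - 2 * J * ∑ k ∈ Icc 1 K, b k| ≤
      C * J ^ 2 := by
  induction J with
  | zero => simp
  | succ J ih =>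
    have hlayer := abs_sum_Icc_sub_le hb K J
    have hdiag := hb 0
    rw [← add_assoc, sum_dist_range_succ]
    rw [abs_le] at *
    push_cast
    constructor <;> linarith

lemma abs_expect_Icc_le_fejerMean {b : ℕ → ℝ} (hb : ∀ k, |b k| ≤ C) {J K : ℕ} (hJ : 0 < J)
    (hJK : J ≤ K) :
    |𝔼 k ∈ Icc 1 K, b k| ≤
      C * (J / K) + K / J * (2 * |fejerMean (K + J) b| + |fejerMean K b|) := by
  have hC : 0 ≤ C := (abs_nonneg _).trans (hb 0)
  have hJ' : (0 : ℝ) < J := by exact_mod_cast hJ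
  have hJK' : (J : ℝ) ≤ K := by exact_mod_cast hJK
  have hK' : (0 : ℝ) < K := hJ'.trans_le hJK'
  have hfejer (n : ℕ) :
      ∑ q ∈ range n ×ˢ range n, b (Nat.dist q.1 q.2) = (n : ℝ) ^ 2 * fejerMean n b := by
    rw [fejerMean, ← card_mul_expect, card_product, card_range, Nat.cast_mul, sq]
  have hlayers := abs_sum_dist_range_add_sub_le hb K J
  rw [hfejer, hfejer, ← card_mul_expect, Nat.card_Icc, Nat.add_sub_cancel] at hlayers
  push_cast at hlayers
  set A := 𝔼 k ∈ Icc 1 K, b k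
  set F := fejerMean K b
  set F' := fejerMean (K + J) b
  have hsq : ((K : ℝ) + J) ^ 2 ≤ 4 * K ^ 2 := by nlinarith
  have hscaled : 2 * J * K * |A| ≤ C * J ^ 2 + 4 * K ^ 2 * |F'| + K ^ 2 * |F| :=
    calc 2 * J * K * |A| = |2 * J * (K * A)| := by
          rw [← mul_assoc, abs_mul, abs_of_pos (by positivity : (0 : ℝ) < 2 * J * K)]
      _ ≤ C * J ^ 2 + |((K : ℝ) + J) ^ 2 * F'| + |(K : ℝ) ^ 2 * F| := by
          grind
      _ = C * J ^ 2 + ((K : ℝ) + J) ^ 2 * |F'| + K ^ 2 * |F| := by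
          simp only [abs_mul, abs_sq]
      _ ≤ _ := by gcongr
  have htarget : 2 * J * K * (C * (J / K) + K / J * (2 * |F'| + |F|)) =
      2 * C * J ^ 2 + 4 * K ^ 2 * |F'| + 2 * K ^ 2 * |F| := by
    field_simp
    ring
  refine le_of_mul_le_mul_left ?_ (by positivity : (0 : ℝ) < 2 * J * K)
  rw [htarget]
  nlinarith [mul_nonneg hC (sq_nonneg (J : ℝ)), mul_nonneg (sq_nonneg (K : ℝ)) (abs_nonneg F)]

lemma abs_expect_Icc_le_fejerMean_of_two_le {b : ℕ → ℝ} (hb : ∀ k, |b k| ≤ C) {r K : ℕ} (hr : 2 ≤ r)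
    (hK : 2 ≤ K) :
    |𝔼 k ∈ Icc 1 K, b k| ≤
      C * (1 / r + 1 / K) + r * (2 * |fejerMean (K + (K / r + 1)) b| + |fejerMean K b|) := by
  have hC : 0 ≤ C := (abs_nonneg _).trans (hb 0)
  have hK0 : (0 : ℝ) < K := by exact_mod_cast (by omega : 0 < K)
  have hJK : K / r + 1 ≤ K := by
    have : K / r ≤ K / 2 := Nat.div_le_div_left hr two_pos
    omega
  have hJ : ((K / r + 1 : ℕ) : ℝ) / K ≤ 1 / r + 1 / K := by
    have : ((K / r : ℕ) : ℝ) ≤ K / r := Nat.cast_div_le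
    rw [div_le_iff₀ hK0, Nat.cast_add_one, add_mul, one_div_mul_cancel hK0.ne', one_div_mul_eq_div]
    gcongr
  have hJ' : (K : ℝ) / (K / r + 1 : ℕ) ≤ r := by
    rw [div_le_iff₀ (by positivity)]
    exact_mod_cast (Nat.lt_mul_div_succ K (by omega)).le
  refine (abs_expect_Icc_le_fejerMean hb (Nat.succ_pos (K / r)) hJK).trans ?_
  gcongr

variable {ι : Type*} {l : Filter ι}

lemma tendsto_expect_Icc_zero_of_tendsto_fejerMean {b : ι → ℕ → ℝ} (hb : ∀ i k, |b i k| ≤ C)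
    (h : Tendsto (fun q : ℕ × ι => fejerMean q.1 (b q.2)) (atTop ×ˢ l) (𝓝 0)) :
    Tendsto (fun q : ℕ × ι => 𝔼 k ∈ Icc 1 q.1, b q.2 k) (atTop ×ˢ l) (𝓝 0) := by
  refine Metric.tendsto_nhds.2 fun ε hε => ?_
  obtain ⟨n, hn⟩ := exists_nat_gt (C / ε)
  obtain ⟨r, hnr, hr⟩ : ∃ r, n ≤ r ∧ 2 ≤ r := ⟨n + 2, by omega, by omega⟩
  have hCr : C * (1 / r + 0) + r * (2 * |(0 : ℝ)| + |(0 : ℝ)|) < ε := by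
    have hr0 : (0 : ℝ) < r := by exact_mod_cast (by omega : 0 < r)
    have hnr' : (n : ℝ) ≤ r := by exact_mod_cast hnr
    simp only [abs_zero, mul_zero, add_zero, mul_one_div]
    rw [div_lt_comm₀ hr0 hε]
    exact hn.trans_le hnr'
  have hextend : Tendsto (fun q : ℕ × ι => (q.1 + (q.1 / r + 1), q.2)) (atTop ×ˢ l)
      (atTop ×ˢ l) :=
    (tendsto_atTop_mono (fun q => q.1.le_add_right _) tendsto_fst).prodMk tendsto_snd
  have hlonger := h.comp hextend
  have hinv : Tendsto (fun q : ℕ × ι => 1 / (q.1 : ℝ)) (atTop ×ˢ l) (𝓝 0) :=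
    tendsto_one_div_atTop_nhds_zero_nat.comp tendsto_fst
  have hbound := ((hinv.const_add (1 / (r : ℝ))).const_mul C).add
    (((hlonger.abs.const_mul 2).add h.abs).const_mul (r : ℝ))
  filter_upwards [hbound.eventually_lt_const hCr, tendsto_fst.eventually (eventually_ge_atTop 2)]
    with q hlt hq
  rw [Real.dist_0_eq_abs]
  exact (abs_expect_Icc_le_fejerMean_of_two_le (hb q.2) hr hq).trans_lt hlt

lemma tendsto_expect_Icc_of_tendsto_fejerMean {b : ι → ℕ → ℝ} (hb : ∀ i k, |b i k| ≤ C) {L : ℝ}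
    (h : Tendsto (fun q : ℕ × ι => fejerMean q.1 (b q.2)) (atTop ×ˢ l) (𝓝 L)) :
    Tendsto (fun q : ℕ × ι => 𝔼 k ∈ Icc 1 q.1, b q.2 k) (atTop ×ˢ l) (𝓝 L) := by
  have hpos : ∀ᶠ q : ℕ × ι in atTop ×ˢ l, 0 < q.1 := tendsto_fst.eventually (eventually_gt_atTop 0)
  have hcentered : Tendsto (fun q : ℕ × ι => fejerMean q.1 fun k => b q.2 k - L) (atTop ×ˢ l)
      (𝓝 0) := by
    refine (tendsto_sub_nhds_zero_iff.2 h).congr' ?_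
    filter_upwards [hpos] with q hq using (fejerMean_sub_const hq _ _).symm
  have hb' (i : ι) (k : ℕ) : |b i k - L| ≤ C + |L| :=
    (abs_sub _ _).trans (add_le_add_left (hb i k) _)
  refine tendsto_sub_nhds_zero_iff.1
    ((tendsto_expect_Icc_zero_of_tendsto_fejerMean hb' hcentered).congr' ?_)
  filter_upwards [hpos] with q hq
  rw [expect_sub_distrib, expect_const (nonempty_Icc.2 hq)]

theorem tendsto_boxMean_of_tendsto_fejerBoxMean {R : ι → (Fin s → ℕ) → ℝ}
    (hR : ∀ i h, |R i h| ≤ C) {L : ℝ}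
    (h : Tendsto (fun q : (Fin s → ℕ) × ι => fejerBoxMean q.1 (R q.2)) (atTop ×ˢ l) (𝓝 L)) :
    Tendsto (fun q : (Fin s → ℕ) × ι => boxMean q.1 (R q.2)) (atTop ×ˢ l) (𝓝 L) := by
  induction s generalizing ι with
  | zero => simpa [boxMean, fejerBoxMean, Subsingleton.elim _ (Fin.elim0 : Fin 0 → ℕ)] using h
  | succ s ih =>
    have htail : Tendsto (fun q : (Fin s → ℕ) × (ℕ × ι) =>
        boxMean q.1 fun l => fejerMean q.2.1 fun k => R q.2.2 (Fin.cons k l))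
        (atTop ×ˢ (atTop ×ˢ l)) (𝓝 L) := by
      refine ih (ι := ℕ × ι) (R := fun p l => fejerMean p.1 fun k => R p.2 (Fin.cons k l))
        (fun p l => abs_fejerMean_le (fun k => hR p.2 (Fin.cons k l)) p.1) ?_
      have hcons : Tendsto (fun q : (Fin s → ℕ) × (ℕ × ι) =>
          ((Fin.cons q.2.1 q.1 : Fin (s + 1) → ℕ), q.2.2)) (atTop ×ˢ (atTop ×ˢ l))
          (atTop ×ˢ l) :=
        (tendsto_fin_cons_atTop tendsto_snd.fst tendsto_fst).prodMk tendsto_snd.snd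
      simpa only [Function.comp_def, fejerBoxMean_succ, fejerMean_fejerBoxMean_comm, Fin.cons_zero,
        Fin.tail_cons] using h.comp hcons
    have hhead : Tendsto (fun q : ℕ × ((Fin s → ℕ) × ι) =>
        𝔼 k ∈ Icc 1 q.1, boxMean q.2.1 fun l => R q.2.2 (Fin.cons k l))
        (atTop ×ˢ (atTop ×ˢ l)) (𝓝 L) := by
      refine tendsto_expect_Icc_of_tendsto_fejerMean (ι := (Fin s → ℕ) × ι)
        (b := fun p k => boxMean p.1 fun l => R p.2 (Fin.cons k l))
        (fun p k => abs_boxMean_le (fun l => hR p.2 (Fin.cons k l)) p.1) ?_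
      have hswap : Tendsto (fun q : ℕ × ((Fin s → ℕ) × ι) => (q.2.1, (q.1, q.2.2)))
          (atTop ×ˢ (atTop ×ˢ l)) (atTop ×ˢ (atTop ×ˢ l)) :=
        tendsto_snd.fst.prodMk (tendsto_fst.prodMk tendsto_snd.snd)
      simpa only [Function.comp_def, fejerMean_boxMean_comm] using htail.comp hswap
    have huncons : Tendsto (fun q : (Fin (s + 1) → ℕ) × ι => (q.1 0, (Fin.tail q.1, q.2)))
        (atTop ×ˢ l) (atTop ×ˢ (atTop ×ˢ l)) :=
      ((tendsto_apply_atTop 0).comp tendsto_fst).prodMk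
        (((tendsto_fin_tail_atTop s).comp tendsto_fst).prodMk tendsto_snd)
    simpa only [Function.comp_def, boxMean_succ] using hhead.comp huncons

lemma tendsto_natCast_div_mul_div_atTop {k : ℕ} (hk : 0 < k) :
    Tendsto (fun n : ℕ => ((n / k * k : ℕ) : ℝ) / n) atTop (𝓝 1) := by
  have hlower : Tendsto (fun n : ℕ => 1 - (k : ℝ) / n) atTop (𝓝 1) := by
    simpa using (tendsto_const_div_atTop_nhds_zero_nat (k : ℝ)).const_sub 1
  refine tendsto_of_tendsto_of_tendsto_of_le_of_le' hlower tendsto_const_nhds ?_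
    (Eventually.of_forall fun n => ?_)
  · filter_upwards [eventually_gt_atTop 0] with n hn
    have hn' : (0 : ℝ) < n := by exact_mod_cast hn
    have : (n : ℝ) ≤ (n / k * k : ℕ) + k := by exact_mod_cast (Nat.lt_div_mul_add hk).le
    rw [le_div_iff₀ hn', sub_mul, one_mul, div_mul_cancel₀ _ hn'.ne']
    linarith
  · exact div_le_one_of_le₀ (by exact_mod_cast Nat.div_mul_le_self n k) n.cast_nonneg

lemma tendsto_fejerBoxMean_sub_round {R : (Fin s → ℕ) → ℝ} (hR : ∀ h, |R h| ≤ C)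
    {H : Fin s → ℕ} (hH : ∀ i, 0 < H i) :
    Tendsto (fun H' => fejerBoxMean H' R - fejerBoxMean (H' / H * H) R) atTop (𝓝 0) := by
  let S (H : Fin s → ℕ) := Fintype.piFinset fun i => range (H i) ×ˢ range (H i)
  have hcard : Tendsto (fun H' => (#(S (H' / H * H)) : ℝ) / #(S H')) atTop (𝓝 1) := by
    have hcoord (i : Fin s) :=
      ((tendsto_natCast_div_mul_div_atTop (hH i)).comp (tendsto_apply_atTop i)).pow 2
    have := tendsto_finsetProd univ fun i _ => hcoord i
    simpa [S, sq, mul_div_mul_comm, ← prod_div_distrib] using this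
  have hbound : Tendsto (fun H' => 2 * C * (1 - (#(S (H' / H * H)) : ℝ) / #(S H'))) atTop
      (𝓝 0) := by
    simpa using (hcard.const_sub 1).const_mul (2 * C)
  refine squeeze_zero_norm' ?_ hbound
  filter_upwards [eventually_ge_atTop H] with H' hle
  have hsub : S (H' / H * H) ⊆ S H' := by
    refine Fintype.piFinset_subset _ _ fun i => ?_
    have := range_mono (Nat.div_mul_le_self (H' i) (H i))
    exact product_subset_product this this
  have hne : (S (H' / H * H)).Nonempty := by
    refine Fintype.piFinset_nonempty.2 fun i => ?_
    have : 0 < H' i / H i * H i := Nat.mul_pos (Nat.div_pos (hle i) (hH i)) (hH i)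
    simpa using this.ne'
  exact abs_expect_sub_expect_le_of_subset hsub hne fun _ _ => hR _

theorem exists_tendsto_boxMean_of_fejerBoxMean_mul_le {R : (Fin s → ℕ) → ℝ}
    (hR : ∀ h, |R h| ≤ C)
    (hmul : ∀ m H : Fin s → ℕ, (∀ i, 0 < m i) → fejerBoxMean (m * H) R ≤ fejerBoxMean H R) :
    ∃ L, Tendsto (fun H => boxMean H R) atTop (𝓝 L) := by
  have hbdd : BddBelow (Set.range fun H => fejerBoxMean H R) := by
    refine ⟨-C, ?_⟩
    rintro _ ⟨H, rfl⟩
    exact neg_le_of_abs_le (abs_fejerBoxMean_le hR H)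
  have hfejer := tendsto_atTop_ciInf_of_mul_le hbdd hmul fun H hH =>
    tendsto_fejerBoxMean_sub_round hR hH
  have hbox := tendsto_boxMean_of_tendsto_fejerBoxMean (ι := Unit) (l := pure ())
    (R := fun _ => R) (fun _ => hR) (Tendsto.comp hfejer tendsto_fst)
  have hpair : Tendsto (fun H : Fin s → ℕ => (H, ())) atTop (atTop ×ˢ pure ()) :=
    tendsto_id.prodMk tendsto_const_pure
  have := hbox.comp hpair
  exact ⟨_, this⟩

end Fejer

section Folner

/-- `I` is a Følner sequence in `ℕ`: shifting `I N` by `1` changes only a vanishing proportion of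
its elements. The proportion is `0` by convention when `I N` is empty. -/
def IsFolnerSeq (I : ℕ → Finset ℕ) : Prop :=
  Tendsto (fun N => (#(symmDiff ((I N).image (· + 1)) (I N)) : ℝ) / #(I N)) atTop (𝓝 0)

lemma isFolnerSeq_Icc {lo hi : ℕ → ℕ}
    (hcard : Tendsto (fun N => #(Icc (lo N) (hi N))) atTop atTop) :
    IsFolnerSeq fun N => Icc (lo N) (hi N) := by
  have hbound : Tendsto (fun N => (2 : ℝ) / #(Icc (lo N) (hi N))) atTop (𝓝 0) :=
    (tendsto_const_div_atTop_nhds_zero_nat 2).comp hcard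
  refine squeeze_zero (fun N => by positivity) (fun N => ?_) hbound
  have hsub : symmDiff ((Icc (lo N) (hi N)).image (· + 1)) (Icc (lo N) (hi N)) ⊆
      {lo N, hi N + 1} := by
    intro n
    simp only [image_add_right_Icc, mem_symmDiff, mem_Icc, mem_insert, mem_singleton]
    omega
  gcongr
  exact_mod_cast (card_le_card hsub).trans card_le_two

variable {𝕜 : Type*} [RCLike 𝕜] {I : ℕ → Finset ℕ} {C : ℝ}

lemma norm_expect_image_sub_expect_le {ι : Type*} [DecidableEq ι] {S : Finset ι} {e : ι → ι}
    (he : Function.Injective e) {f : ι → 𝕜} (hf : ∀ n, ‖f n‖ ≤ C) :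
    ‖𝔼 n ∈ S, f (e n) - 𝔼 n ∈ S, f n‖ ≤ C * (#(symmDiff (S.image e) S) / #S) := by
  have hsum : ∑ n ∈ S, f (e n) - ∑ n ∈ S, f n =
      ∑ n ∈ S.image e \ S, f n - ∑ n ∈ S \ S.image e, f n := by
    rw [← sum_image he.injOn, sum_sdiff_sub_sum_sdiff]
  have hnorm (T : Finset ι) : ‖∑ n ∈ T, f n‖ ≤ #T * C := by
    simpa using norm_sum_le_of_le T fun n _ => hf n
  have hcard : (#(symmDiff (S.image e) S) : ℝ) = #(S.image e \ S) + #(S \ S.image e) := by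
    rw [symmDiff_def, sup_eq_union, card_union_of_disjoint disjoint_sdiff_sdiff, Nat.cast_add]
  rw [expect_eq_sum_div_card, expect_eq_sum_div_card, ← sub_div, hsum, norm_div,
    RCLike.norm_natCast, ← mul_div_assoc, hcard]
  gcongr
  linarith [norm_sub_le (∑ n ∈ S.image e \ S, f n) (∑ n ∈ S \ S.image e, f n),
    hnorm (S.image e \ S), hnorm (S \ S.image e)]

lemma IsFolnerSeq.tendsto_expect_add (hI : IsFolnerSeq I) {f : ℕ → 𝕜} (hf : ∀ n, ‖f n‖ ≤ C)
    {L : 𝕜} (h : Tendsto (fun N => 𝔼 n ∈ I N, f n) atTop (𝓝 L)) (k : ℕ) :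
    Tendsto (fun N => 𝔼 n ∈ I N, f (n + k)) atTop (𝓝 L) := by
  induction k with
  | zero => exact h
  | succ k ih =>
    have hsucc : Tendsto (fun N => 𝔼 n ∈ I N, f (n + 1 + k) - 𝔼 n ∈ I N, f (n + k)) atTop
        (𝓝 0) :=
      squeeze_zero_norm
        (fun N => norm_expect_image_sub_expect_le (add_left_injective 1) fun n => hf (n + k))
        (by simpa using hI.const_mul C)
    simpa [add_right_comm _ 1 k, add_assoc] using hsucc.add ih

variable {F γ : ℕ → ℂ}

lemma IsFolnerSeq.tendsto_expect_re_mul_conj (hI : IsFolnerSeq I) (hF : ∀ n, ‖F n‖ ≤ C)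
    (hγ : ∀ k, Tendsto (fun N => 𝔼 n ∈ I N, F n * conj (F (n + k))) atTop (𝓝 (γ k))) (x y : ℕ) :
    Tendsto (fun N => 𝔼 n ∈ I N, (F (n + x) * conj (F (n + y))).re) atTop
      (𝓝 (γ (Nat.dist x y)).re) := by
  wlog hxy : x ≤ y generalizing x y
  · simpa [Nat.dist_comm, mul_comm] using this y x (le_of_not_ge hxy)
  obtain ⟨k, rfl⟩ := exists_add_of_le hxy
  have hC : 0 ≤ C := (norm_nonneg _).trans (hF 0)
  have hbound (n : ℕ) : ‖F n * conj (F (n + k))‖ ≤ C * C := by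
    rw [norm_mul, RCLike.norm_conj]
    exact mul_le_mul (hF n) (hF (n + k)) (norm_nonneg _) hC
  have hshift := hI.tendsto_expect_add hbound (hγ k) x
  rw [Nat.dist_eq_sub_of_le hxy, Nat.add_sub_cancel_left]
  simpa only [← Complex.re_expect, Function.comp_def, add_assoc] using
    (Complex.continuous_re.tendsto (γ k)).comp hshift

lemma IsFolnerSeq.tendsto_expect_sq_norm (hI : IsFolnerSeq I) (hF : ∀ n, ‖F n‖ ≤ C)
    (hγ : ∀ k, Tendsto (fun N => 𝔼 n ∈ I N, F n * conj (F (n + k))) atTop (𝓝 (γ k))) (t K : ℕ) :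
    Tendsto (fun N => 𝔼 n ∈ I N, ‖𝔼 x ∈ range K, F (n + (t + x))‖ ^ 2) atTop
      (𝓝 (fejerMean K fun k => (γ k).re)) := by
  simp only [sq_norm_expect_eq, expect_comm (I _), fejerMean]
  refine tendsto_expect fun q _ => ?_
  simpa only [Nat.dist_add_add_left] using
    hI.tendsto_expect_re_mul_conj hF hγ (t + q.1) (t + q.2)

lemma IsFolnerSeq.fejerMean_mul_le (hI : IsFolnerSeq I) (hF : ∀ n, ‖F n‖ ≤ C)
    (hγ : ∀ k, Tendsto (fun N => 𝔼 n ∈ I N, F n * conj (F (n + k))) atTop (𝓝 (γ k)))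
    {m : ℕ} (hm : 0 < m) (K : ℕ) :
    fejerMean (m * K) (fun k => (γ k).re) ≤ fejerMean K fun k => (γ k).re := by
  have hlong := hI.tendsto_expect_sq_norm hF hγ 0 (m * K)
  have hblocks := tendsto_expect (S := range m) fun j _ =>
    hI.tendsto_expect_sq_norm hF hγ (j * K) K
  rw [expect_const (nonempty_range_iff.2 hm.ne')] at hblocks
  refine le_of_tendsto_of_tendsto' hlong hblocks fun N => ?_
  rw [expect_comm]
  refine expect_le_expect fun n _ => ?_
  simp only [zero_add, expect_range_mul]
  exact sq_norm_expect_le _ _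

end Folner

section CubeProd

variable {s : ℕ} {a : ℕ → ℂ} {C : ℝ}

lemma epsDot_cons (e : Bool) (ε : Fin s → Bool) (k : ℕ) (l : Fin s → ℕ) :
    epsDot (Fin.cons e ε : Fin (s + 1) → Bool) (Fin.cons k l) =
      (if e then k else 0) + epsDot ε l := by
  simp [epsDot, Fin.sum_univ_succ]

lemma card_filter_cons_eq_true (e : Bool) (ε : Fin s → Bool) :
    #{j | (Fin.cons e ε : Fin (s + 1) → Bool) j = true} =
      (if e then 1 else 0) + #{j | ε j = true} := by
  cases e <;> simp [Fin.card_filter_univ_succ, add_comm]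

lemma cubeProd_cons (a : ℕ → ℂ) (k : ℕ) (l : Fin s → ℕ) (n : ℕ) :
    cubeProd a (Fin.cons k l : Fin (s + 1) → ℕ) n =
      cubeProd a l n * conj (cubeProd a l (n + k)) := by
  have hcons (e : Bool) (ε : Fin s → Bool) :
      Fin.consEquiv (fun _ => Bool) (e, ε) = Fin.cons e ε := rfl
  have hparity (m : ℕ) : (1 + m) % 2 = 1 ↔ ¬m % 2 = 1 := by omega
  simp only [cubeProd]
  rw [← (Fin.consEquiv fun _ => Bool).prod_comp, Fintype.prod_prod_type, Fintype.prod_bool,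
    mul_comm, map_prod]
  simp only [hcons, card_filter_cons_eq_true, epsDot_cons, if_true, Bool.false_eq_true, if_false,
    zero_add, hparity, ite_not, apply_ite conj, Complex.conj_conj, add_assoc]

lemma cubeProd_cons_eq_cubeProd_mul_conj (a : ℕ → ℂ) (k : ℕ) (l : Fin s → ℕ) (n : ℕ) :
    cubeProd a (Fin.cons k l : Fin (s + 1) → ℕ) n =
      cubeProd (fun n => a n * conj (a (n + k))) l n := by
  rw [cubeProd_cons]
  simp only [cubeProd, map_prod, ← prod_mul_distrib]
  refine prod_congr rfl fun ε _ => ?_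
  rw [add_right_comm]
  split_ifs <;> simp

lemma norm_cubeProd_le (ha : ∀ n, ‖a n‖ ≤ C) (h : Fin s → ℕ) (n : ℕ) :
    ‖cubeProd a h n‖ ≤ C ^ 2 ^ s := by
  calc ‖cubeProd a h n‖ ≤ ∏ _ε : Fin s → Bool, C := by
        rw [cubeProd, norm_prod]
        refine prod_le_prod (fun _ _ => norm_nonneg _) fun ε _ => ?_
        split_ifs <;> simp [ha]
    _ = C ^ 2 ^ s := by simp

lemma exists_prodShift_eq_cubeProd (a : ℕ → ℂ) (h : Fin s → ℕ) :
    ∃ (k : ℕ) (sh : Fin k → ℕ) (cj cj' : Fin k → Bool),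
      prodShift a sh cj = cubeProd a h ∧ prodShift a sh cj' = fun n => conj (cubeProd a h n) := by
  let e := Fintype.equivFin (Fin s → Bool)
  let odd (ε : Fin s → Bool) : Bool := #{j | ε j = true} % 2 = 1
  refine ⟨_, fun i => epsDot (e.symm i) h, fun i => odd (e.symm i), fun i => !odd (e.symm i),
    funext fun n => ?_, funext fun n => ?_⟩ <;>
    simp only [prodShift, cubeProd, map_prod] <;>
    rw [← e.symm.prod_comp]
  · simp [odd]
  · simp only [odd, Bool.not_eq_true', decide_eq_false_iff_not, ite_not, apply_ite conj,
      Complex.conj_conj]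

lemma abs_re_le_of_tendsto_expect_cubeProd {I : ℕ → Finset ℕ} (ha : ∀ n, ‖a n‖ ≤ C)
    {h : Fin s → ℕ} {z : ℂ}
    (hz : Tendsto (fun N => 𝔼 n ∈ I N, cubeProd a h n) atTop (𝓝 z)) : |z.re| ≤ C ^ 2 ^ s := by
  have hC : 0 ≤ C := (norm_nonneg _).trans (ha 0)
  have hre := ((Complex.continuous_re.tendsto z).comp hz).abs
  refine le_of_tendsto' hre fun N => ?_
  rw [Function.comp_apply, Complex.re_expect]
  exact abs_expect_le_of_abs_le (by positivity) fun n _ =>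
    (Complex.abs_re_le_norm _).trans (norm_cubeProd_le ha h n)

theorem IsFolnerSeq.fejerBoxMean_mul_le {I : ℕ → Finset ℕ} (hI : IsFolnerSeq I)
    (ha : ∀ n, ‖a n‖ ≤ C) {c : (Fin s → ℕ) → ℂ}
    (hc : ∀ h, Tendsto (fun N => 𝔼 n ∈ I N, cubeProd a h n) atTop (𝓝 (c h)))
    {m : Fin s → ℕ} (hm : ∀ i, 0 < m i) (H : Fin s → ℕ) :
    fejerBoxMean (m * H) (fun h => (c h).re) ≤ fejerBoxMean H fun h => (c h).re := by
  induction s generalizing a C with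
  | zero => rw [Subsingleton.elim (m * H) H]
  | succ s ih =>
    have htail (k : ℕ) : fejerBoxMean (Fin.tail m * Fin.tail H) (fun l => (c (Fin.cons k l)).re) ≤
        fejerBoxMean (Fin.tail H) fun l => (c (Fin.cons k l)).re := by
      have hderiv (n : ℕ) : ‖a n * conj (a (n + k))‖ ≤ C * C := by
        rw [norm_mul, RCLike.norm_conj]
        exact mul_le_mul (ha n) (ha _) (norm_nonneg _) ((norm_nonneg _).trans (ha n))
      refine ih hderiv (c := fun l => c (Fin.cons k l)) (fun l => ?_) (fun i => hm i.succ) _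
      simpa only [cubeProd_cons_eq_cubeProd_mul_conj] using hc (Fin.cons k l)
    have hhead (l : Fin s → ℕ) : fejerMean (m 0 * H 0) (fun k => (c (Fin.cons k l)).re) ≤
        fejerMean (H 0) fun k => (c (Fin.cons k l)).re := by
      refine hI.fejerMean_mul_le (norm_cubeProd_le ha l) (γ := fun k => c (Fin.cons k l))
        (fun k => ?_) (hm 0) (H 0)
      simpa only [cubeProd_cons] using hc (Fin.cons k l)
    simp only [fejerBoxMean_succ]
    calc fejerMean (m 0 * H 0) (fun k => fejerBoxMean (Fin.tail m * Fin.tail H)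
            fun l => (c (Fin.cons k l)).re)
        ≤ fejerMean (m 0 * H 0) fun k => fejerBoxMean (Fin.tail H)
            fun l => (c (Fin.cons k l)).re := fejerMean_mono htail _
      _ = fejerBoxMean (Fin.tail H) fun l => fejerMean (m 0 * H 0)
            fun k => (c (Fin.cons k l)).re := fejerMean_fejerBoxMean_comm _ _ _
      _ ≤ fejerBoxMean (Fin.tail H) fun l => fejerMean (H 0)
            fun k => (c (Fin.cons k l)).re := fejerBoxMean_mono hhead _
      _ = _ := (fejerMean_fejerBoxMean_comm _ _ _).symm

end CubeProd

section Ergodic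

/-- The mean ergodic identity
`lim_H 𝔼_{h ≤ H} 𝔼_{m ∈ I} b (m + h) c m = 𝔼_{m ∈ I} b m * 𝔼_{m ∈ I} c m` for all finite products
`b`, `c` of shifts of `a` and `conj a`. It expresses ergodicity of the Furstenberg system of `a`
along `I`. -/
def IsErgodicAlong (I : ℕ → Finset ℕ) (a : ℕ → ℂ) : Prop :=
  ∀ (k k' : ℕ) (sh : Fin k → ℕ) (cj : Fin k → Bool) (sh' : Fin k' → ℕ) (cj' : Fin k' → Bool)
    (β γ : ℂ) (φ : ℕ → ℂ),
    Tendsto (cesaroAvg I (prodShift a sh cj)) atTop (𝓝 β) →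
    Tendsto (cesaroAvg I (prodShift a sh' cj')) atTop (𝓝 γ) →
    (∀ h : ℕ, Tendsto (cesaroAvg I fun m => prodShift a sh cj (m + h) * prodShift a sh' cj' m)
      atTop (𝓝 (φ h))) →
    Tendsto (fun H : ℕ => (H : ℂ)⁻¹ * ∑ h ∈ Icc 1 H, φ h) atTop (𝓝 (β * γ))

lemma cesaroAvg_eq_expect (I : ℕ → Finset ℕ) (f : ℕ → ℂ) :
    cesaroAvg I f = fun N => 𝔼 n ∈ I N, f n := by
  funext N
  rw [cesaroAvg, expect_eq_sum_div_card, div_eq_inv_mul]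

lemma inv_pow_mul_sum_piFinset_Icc {K : Type*} [Field K] [CharZero K] (t H : ℕ)
    (f : (Fin t → ℕ) → K) :
    ((H : K) ^ t)⁻¹ * ∑ h ∈ Fintype.piFinset fun _ : Fin t => Icc 1 H, f h =
      𝔼 h ∈ Fintype.piFinset fun _ : Fin t => Icc 1 H, f h := by
  simp [expect_eq_sum_div_card, div_eq_inv_mul]

variable {I : ℕ → Finset ℕ} {a : ℕ → ℂ} {t : ℕ} {c : (Fin (t + 1) → ℕ) → ℂ}
  {d : (Fin t → ℕ) → ℂ}

lemma IsErgodicAlong.tendsto_expect_cons (herg : IsErgodicAlong I a)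
    (hc : ∀ h, Tendsto (cesaroAvg I (cubeProd a h)) atTop (𝓝 (c h)))
    (hd : ∀ h, Tendsto (cesaroAvg I (cubeProd a h)) atTop (𝓝 (d h))) (l : Fin t → ℕ) :
    Tendsto (fun K => 𝔼 k ∈ Icc 1 K, (c (Fin.cons k l)).re) atTop (𝓝 (‖d l‖ ^ 2)) := by
  obtain ⟨j, sh, cj, cj', hcube, hconj⟩ := exists_prodShift_eq_cubeProd a l
  have hdconj : Tendsto (cesaroAvg I (prodShift a sh cj')) atTop (𝓝 (conj (d l))) := by
    simpa only [hconj, cesaroAvg_eq_expect, map_expect, Function.comp_def] using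
      (Complex.continuous_conj.tendsto (d l)).comp (hd l)
  have hproduct := herg j j sh cj' sh cj _ _ (fun k => c (Fin.cons k l)) hdconj
    (by simpa only [hcube] using hd l) fun k => by
      simpa only [hcube, hconj, cesaroAvg_eq_expect, cubeProd_cons, mul_comm] using
        hc (Fin.cons k l)
  have hnorm : (conj (d l) * d l).re = ‖d l‖ ^ 2 := by
    rw [mul_comm, Complex.mul_conj, Complex.ofReal_re, Complex.normSq_eq_norm_sq]
  have hre := (Complex.continuous_re.tendsto _).comp hproduct
  rw [hnorm] at hre
  refine hre.congr fun K => ?_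
  rw [← Complex.re_expect, expect_eq_sum_div_card, Nat.card_Icc, Nat.add_sub_cancel,
    div_eq_inv_mul, Function.comp_apply]

theorem IsFolnerSeq.tendsto_boxMean_sq_norm (hI : IsFolnerSeq I) {C : ℝ} (ha : ∀ n, ‖a n‖ ≤ C)
    (herg : IsErgodicAlong I a)
    (hc : ∀ h, Tendsto (cesaroAvg I (cubeProd a h)) atTop (𝓝 (c h)))
    (hd : ∀ h, Tendsto (cesaroAvg I (cubeProd a h)) atTop (𝓝 (d h))) {v : ℝ}
    (hdiag : Tendsto (fun H => boxMean (fun _ => H) fun h => (c h).re) atTop (𝓝 v)) :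
    Tendsto (fun H => boxMean (fun _ => H) fun h => ‖d h‖ ^ 2) atTop (𝓝 v) := by
  have hc' (h : Fin (t + 1) → ℕ) :
      Tendsto (fun N => 𝔼 n ∈ I N, cubeProd a h n) atTop (𝓝 (c h)) :=
    cesaroAvg_eq_expect I (cubeProd a h) ▸ hc h
  obtain ⟨L, hL⟩ := exists_tendsto_boxMean_of_fejerBoxMean_mul_le
    (fun h => abs_re_le_of_tendsto_expect_cubeProd ha (hc' h))
    fun m H hm => hI.fejerBoxMean_mul_le ha hc' hm H
  obtain rfl : L = v := tendsto_nhds_unique (hL.comp (tendsto_const_pi_atTop _)) hdiag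
  have hcons : Tendsto (fun q : ℕ × ℕ => (Fin.cons q.2 fun _ => q.1 : Fin (t + 1) → ℕ))
      (atTop ×ˢ atTop) atTop :=
    tendsto_fin_cons_atTop tendsto_snd ((tendsto_const_pi_atTop _).comp tendsto_fst)
  refine tendsto_of_tendsto_prod_of_tendsto (hL.comp hcons) fun H => ?_
  have hinner := tendsto_expect (S := Fintype.piFinset fun _ : Fin t => Icc 1 H) fun l _ =>
    herg.tendsto_expect_cons hc hd l
  exact hinner.congr fun K => (boxMean_cons K (fun _ => H) _).symm

theorem ergodic_uniformity_seminorm_formula_general (hI : IsFolnerSeq I) {C : ℝ}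
    (ha : ∀ n, ‖a n‖ ≤ C) (herg : IsErgodicAlong I a)
    (hc : ∀ h, Tendsto (cesaroAvg I (cubeProd a h)) atTop (𝓝 (c h))) {v : ℝ}
    (hlim : Tendsto (fun H : ℕ => ((H : ℂ) ^ (t + 1))⁻¹ *
      ∑ h ∈ Fintype.piFinset (fun _ : Fin (t + 1) => Icc 1 H), c h) atTop (𝓝 v))
    (hd : ∀ h, Tendsto (cesaroAvg I (cubeProd a h)) atTop (𝓝 (d h))) :
    Tendsto (fun H : ℕ => ((H : ℝ) ^ t)⁻¹ *
      ∑ h ∈ Fintype.piFinset (fun _ : Fin t => Icc 1 H), ‖d h‖ ^ 2) atTop (𝓝 v) := by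
  simp only [inv_pow_mul_sum_piFinset_Icc] at hlim ⊢
  refine hI.tendsto_boxMean_sq_norm ha herg hc hd ?_
  simpa only [boxMean, Function.comp_def, Complex.re_expect, Complex.ofReal_re] using
    (Complex.continuous_re.tendsto _).comp hlim

end Ergodic

/-- Step 1 of the proof of Theorem 4.1: if `a` is bounded by `1`, admits correlations
for Cesàro averages on intervals `I` with `|I_N| → ∞`, and the induced Furstenberg system
is ergodic (expressed by the mean ergodic identity
`lim_H 𝔼_{h∈[H]} (𝔼_{m∈I} b(m+h)c(m)) = 𝔼_{m∈I} b ⋅ 𝔼_{m∈I} c` for all finite products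
`b, c` of shifts of `a` and `conj a`), then for every `s ≥ 2`:
`‖a‖_{U^s(I)}^{2^s} = 𝔼_{h∈ℕ^{s-1}} |𝔼_{n∈I} ∏_{ε∈{0,1}^{s-1}} C^{|ε|} a(n+ε·h)|²`. -/
theorem ergodic_uniformity_seminorm_formula
    (lo hi : ℕ → ℕ) (I : ℕ → Finset ℕ)
    (hI : ∀ N, I N = Finset.Icc (lo N) (hi N))
    (hIcard : Tendsto (fun N => (I N).card) atTop atTop)
    (a : ℕ → ℂ) (ha : ∀ n, ‖a n‖ ≤ 1)
    (hcorr : ∀ (k : ℕ) (sh : Fin k → ℕ) (cj : Fin k → Bool),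
      ∃ L : ℂ, Tendsto (cesaroAvg I (prodShift a sh cj)) atTop (𝓝 L))
    (herg : ∀ (k k' : ℕ) (sh : Fin k → ℕ) (cj : Fin k → Bool)
        (sh' : Fin k' → ℕ) (cj' : Fin k' → Bool) (β γ : ℂ) (φ : ℕ → ℂ),
      Tendsto (cesaroAvg I (prodShift a sh cj)) atTop (𝓝 β) →
      Tendsto (cesaroAvg I (prodShift a sh' cj')) atTop (𝓝 γ) →
      (∀ h : ℕ, Tendsto (cesaroAvg I fun m =>
          prodShift a sh cj (m + h) * prodShift a sh' cj' m) atTop (𝓝 (φ h))) →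
      Tendsto (fun H : ℕ => (H : ℂ)⁻¹ * ∑ h ∈ Finset.Icc 1 H, φ h) atTop (𝓝 (β * γ)))
    (s : ℕ) (hs : 2 ≤ s)
    (u : ℝ) (hu : 0 ≤ u)
    (c : (Fin s → ℕ) → ℂ)
    (hc : ∀ h : Fin s → ℕ, Tendsto (cesaroAvg I (cubeProd a h)) atTop (𝓝 (c h)))
    (hlim : Tendsto (fun H : ℕ => ((H : ℂ) ^ s)⁻¹ *
        ∑ h ∈ Fintype.piFinset (fun _ : Fin s => Finset.Icc 1 H), c h) atTop
        (𝓝 ((u : ℂ) ^ (2 ^ s))))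
    (d : (Fin (s - 1) → ℕ) → ℂ)
    (hd : ∀ h : Fin (s - 1) → ℕ, Tendsto (cesaroAvg I (cubeProd a h)) atTop (𝓝 (d h))) :
    Tendsto (fun H : ℕ => ((H : ℝ) ^ (s - 1))⁻¹ *
        ∑ h ∈ Fintype.piFinset (fun _ : Fin (s - 1) => Finset.Icc 1 H), ‖d h‖ ^ 2) atTop
      (𝓝 (u ^ (2 ^ s))) := by
  obtain ⟨t, rfl⟩ : ∃ t, s = t + 1 := ⟨s - 1, by omega⟩
  obtain rfl : I = fun N => Icc (lo N) (hi N) := funext hI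
  exact ergodic_uniformity_seminorm_formula_general (isFolnerSeq_Icc hIcard) ha herg hc
    (by exact_mod_cast hlim) hd
end

section
/- Let f₁,…,f_s : ℕ → ℂ be bounded multiplicative functions with |f_j(p)| = 1 for all primes p, let n₁,…,n_s ∈ ℕ, and let I = ([N_k]) be intervals with N_k → ∞. Suppose all the relevant logarithmic limits exist. Then 𝔼^{log}_{m∈I} ∏_{j=1}^s f_j(m+n_j) = 𝔼_{p∈ℙ} c_p · (𝔼^{log}_{m∈I} ∏_{j=1}^s f_j(m + p·n_j)), where c_p = ∏_{j=1}^s conj(f_j(p)), provided one assumes the identity 𝔼_{p∈ℙ} c_p(𝔼^{log}_{m∈I} ∏_j a_j(pm+pn_j)) = 𝔼_{p∈ℙ} c_p(𝔼^{log}_{m∈I} ∏_j a_j(m+pn_j)) (Tao's identity). In particular, the intermediate step 𝔼^{log}_{m∈I} ∏_j f_j(m+n_j) = c_p · 𝔼^{log}_{m∈I} ∏_j f_j(pm+pn_j) + O(1/p) holds for each prime p. -/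
open Filter Finset Topology

/-- Logarithmic average of `f` over `[1, N k]`. -/
noncomputable def logAvgIcc (N : ℕ → ℕ) (f : ℕ → ℂ) (k : ℕ) : ℂ :=
  ((∑ n ∈ Finset.Icc 1 (N k), (n : ℝ)⁻¹ : ℝ) : ℂ)⁻¹ * ∑ n ∈ Finset.Icc 1 (N k), f n / (n : ℂ)

/-- Average over the primes: `𝔼_{p∈ℙ} x(p) = lim_N (log N / N) ∑_{p ≤ N} x(p)`;
this is the `N`-th approximant. -/
noncomputable def primeAvg (x : ℕ → ℂ) (N : ℕ) : ℂ :=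
  ((Real.log N / N : ℝ) : ℂ) * ∑ p ∈ (Finset.range (N + 1)).filter Nat.Prime, x p

/-!
The Dirichlet series of `Λ`, the negative logarithmic derivative of `ζ`, has residue `1` at `s = 1`,
so an Abelian theorem shows that `ψ(n) / n`, and with it `π(n) log n / n`, can only converge to `1`.
The bound of Chebyshev makes the prime averages of a null sequence tend to `0`. Hence convergent
prime averages of a sequence that converges along the primes have the same limit as the sequence:
assuming that the averages converge replaces the prime number theorem.

For a prime `p`, the products `∏ f_j(m + n_j)` and `c_p ∏ f_j(p m + p n_j)` are equal unless `m`
lies in one of the residue classes `-n_j` modulo `p`. These have logarithmic density `1 / p`, so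
the logarithmic averages differ by `O(1 / p)`, which vanishes along the primes.
-/

section Chebyshev

open scoped LSeries.notation ArithmeticFunction.vonMangoldt

lemma tendsto_sub_mul_logDeriv_of_simple_pole {f : ℂ → ℂ} {a c : ℂ}
    (hf : ∀ᶠ z in 𝓝[≠] a, DifferentiableAt ℂ f z) (hc : c ≠ 0)
    (hlim : Tendsto (fun z ↦ (z - a) * f z) (𝓝[≠] a) (𝓝 c)) :
    Tendsto (fun z ↦ (z - a) * logDeriv f z) (𝓝[≠] a) (𝓝 (-1)) := by
  set g : ℂ → ℂ := Function.update (fun z ↦ (z - a) * f z) a c with hg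
  have g_eventuallyEq {z : ℂ} (hz : z ≠ a) : g =ᶠ[𝓝 z] fun w ↦ (w - a) * f w := by
    filter_upwards [isOpen_ne.mem_nhds hz] with w hw using Function.update_of_ne hw ..
  have g_analytic : AnalyticAt ℂ g a := by
    refine Complex.analyticAt_of_differentiable_on_punctured_nhds_of_continuousAt ?_
      (continuousAt_update_same.mpr hlim)
    filter_upwards [hf, self_mem_nhdsWithin] with z hfz hz
    exact (g_eventuallyEq hz).differentiableAt_iff.mpr (by fun_prop)
  have g_logDeriv : ContinuousAt (logDeriv g) a :=
    g_analytic.deriv.continuousAt.div g_analytic.continuousAt (by simpa [hg] using hc)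
  have lim : Tendsto (fun z ↦ (z - a) * logDeriv g z - 1) (𝓝[≠] a) (𝓝 (-1)) := by
    have h : ContinuousAt (fun z ↦ (z - a) * logDeriv g z - 1) a := by fun_prop
    simpa using h.tendsto.mono_left nhdsWithin_le_nhds
  refine lim.congr' ?_
  filter_upwards [hf, self_mem_nhdsWithin, hlim.eventually_ne hc] with z hfz hz hne
  have hza : z - a ≠ 0 := sub_ne_zero.mpr hz
  have logDeriv_g : logDeriv g z = 1 / (z - a) + logDeriv f z := by
    rw [(logDeriv_congr_nhds (g_eventuallyEq hz)).self_of_nhds,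
      logDeriv_mul z hza (right_ne_zero_of_mul hne) (by fun_prop) hfz]
    simp [logDeriv_apply]
  rw [logDeriv_g]
  field_simp
  ring

lemma tendsto_sub_one_mul_LSeries_vonMangoldt :
    Tendsto (fun s : ℝ ↦ ((s : ℂ) - 1) * L ↗Λ s) (𝓝[>] 1) (𝓝 1) := by
  have zeta_differentiable : ∀ᶠ s in 𝓝[≠] (1 : ℂ), DifferentiableAt ℂ riemannZeta s := by
    filter_upwards [self_mem_nhdsWithin] with s hs using differentiableAt_riemannZeta hs
  have ofReal_tendsto : Tendsto ((↑) : ℝ → ℂ) (𝓝[>] 1) (𝓝[≠] 1) :=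
    Complex.continuous_ofReal.continuousWithinAt.tendsto_nhdsWithin fun s (hs : 1 < s) ↦ by
      simpa using hs.ne'
  have residue := ((tendsto_sub_mul_logDeriv_of_simple_pole zeta_differentiable one_ne_zero
    riemannZeta_residue_one).comp ofReal_tendsto).neg
  rw [neg_neg] at residue
  refine residue.congr' ?_
  filter_upwards [self_mem_nhdsWithin] with s (hs : 1 < s)
  rw [ArithmeticFunction.LSeries_vonMangoldt_eq_deriv_riemannZeta_div (by simpa using hs)]
  simp only [Function.comp_apply, logDeriv_apply, neg_div, mul_neg]

lemma eq_one_of_tendsto_psi_div {c : ℝ}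
    (h : Tendsto (fun n : ℕ ↦ Chebyshev.psi n / n) atTop (𝓝 c)) : c = 1 := by
  have abelian : Tendsto (fun s : ℝ ↦ ((s : ℂ) - 1) * L ↗Λ s) (𝓝[>] 1) (𝓝 c) := by
    refine LSeries_tendsto_sub_mul_nhds_one_of_tendsto_sum_div_and_nonneg _
      (h.congr fun n ↦ ?_) fun n ↦ ArithmeticFunction.vonMangoldt_nonneg
    rw [Chebyshev.psi, Nat.floor_natCast]
    rfl
  exact_mod_cast tendsto_nhds_unique abelian tendsto_sub_one_mul_LSeries_vonMangoldt

lemma tendsto_psi_sub_theta_div :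
    Tendsto (fun x : ℝ ↦ (Chebyshev.psi x - Chebyshev.theta x) / x) atTop (𝓝 0) := by
  have sqrt_isLittleO : Real.sqrt =o[atTop] (id : ℝ → ℝ) := by
    refine Asymptotics.isLittleO_of_tendsto (fun x hx ↦ ?_) ?_
    · exact Real.sqrt_eq_zero_of_nonpos (le_of_eq hx)
    · simpa only [id, Real.sqrt_div_self'] using Real.tendsto_sqrt_atTop.const_div_atTop 1
  exact (Chebyshev.isBigO_psi_sub_theta_sqrt.trans_isLittleO sqrt_isLittleO).tendsto_div_nhds_zero

lemma tendsto_log_div_mul_primeCounting_sub_theta_div :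
    Tendsto (fun x : ℝ ↦ Real.log x / x * Nat.primeCounting ⌊x⌋₊ - Chebyshev.theta x / x)
      atTop (𝓝 0) := by
  have bigO := (Asymptotics.isBigO_refl (fun x : ℝ ↦ Real.log x / x) atTop).mul
    Chebyshev.primeCounting_sub_theta_div_log_isBigO
  have bound_tendsto :
      Tendsto (fun x : ℝ ↦ Real.log x / x * (x / Real.log x ^ 2)) atTop (𝓝 0) := by
    refine Real.tendsto_log_atTop.inv_tendsto_atTop.congr' ?_
    filter_upwards [eventually_gt_atTop 1] with x hx
    have := Real.log_pos hx
    rw [Pi.inv_apply]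
    field_simp
  refine (bigO.trans_tendsto bound_tendsto).congr' ?_
  filter_upwards [eventually_gt_atTop 1] with x hx
  have := Real.log_pos hx
  field_simp

lemma eq_one_of_tendsto_log_div_mul_primeCounting {c : ℝ}
    (h : Tendsto (fun n : ℕ ↦ Real.log n / n * Nat.primeCounting n) atTop (𝓝 c)) : c = 1 := by
  have sub_psi_tendsto := (tendsto_log_div_mul_primeCounting_sub_theta_div.sub
    tendsto_psi_sub_theta_div).comp tendsto_natCast_atTop_atTop
  have psi_tendsto := h.sub sub_psi_tendsto
  rw [sub_zero, sub_zero] at psi_tendsto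
  refine eq_one_of_tendsto_psi_div (psi_tendsto.congr fun n ↦ ?_)
  simp only [Function.comp_apply, Nat.floor_natCast]
  ring

lemma isBigO_log_div_mul_primeCounting_one :
    (fun n : ℕ ↦ Real.log n / n * Nat.primeCounting n) =O[atTop] fun _ ↦ (1 : ℝ) := by
  refine Asymptotics.IsBigO.of_bound (Real.log 4 + 1) ?_
  filter_upwards [tendsto_natCast_atTop_atTop.eventually
    (Chebyshev.eventually_primeCounting_le one_pos), eventually_gt_atTop 1] with n hn n_gt
  have hn_one : (1 : ℝ) < n := by exact_mod_cast n_gt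
  have log_pos := Real.log_pos hn_one
  rw [Nat.floor_natCast] at hn
  rw [norm_one, mul_one, Real.norm_of_nonneg (by positivity)]
  calc Real.log n / n * Nat.primeCounting n
      ≤ Real.log n / n * ((Real.log 4 + 1) * n / Real.log n) := by gcongr
    _ = Real.log 4 + 1 := by field_simp

end Chebyshev

section PrimeAverage

variable {x : ℕ → ℂ} {A L : ℂ}

lemma primeAvg_one (n : ℕ) :
    primeAvg (fun _ ↦ 1) n = (Real.log n / n * Nat.primeCounting n : ℝ) := by
  rw [primeAvg, ← Nat.primesLE_eq_filter_range, sum_const, Nat.primesLE_card_eq_primeCounting]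
  push_cast
  rw [nsmul_one]

lemma primeAvg_sub_const (x : ℕ → ℂ) (A : ℂ) (n : ℕ) :
    primeAvg (fun p ↦ x p - A) n = primeAvg x n - A * primeAvg (fun _ ↦ 1) n := by
  simp only [primeAvg, sum_sub_distrib, sum_const, nsmul_eq_mul]
  ring

lemma eq_one_of_tendsto_primeAvg_one (h : Tendsto (primeAvg fun _ ↦ 1) atTop (𝓝 L)) : L = 1 := by
  have re_tendsto : Tendsto (fun n ↦ (primeAvg (fun _ ↦ 1) n).re) atTop (𝓝 L.re) :=
    (Complex.continuous_re.tendsto L).comp h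
  have im_tendsto : Tendsto (fun n ↦ (primeAvg (fun _ ↦ 1) n).im) atTop (𝓝 L.im) :=
    (Complex.continuous_im.tendsto L).comp h
  simp only [primeAvg_one, Complex.ofReal_re, Complex.ofReal_im] at re_tendsto im_tendsto
  exact Complex.ext (eq_one_of_tendsto_log_div_mul_primeCounting re_tendsto)
    (tendsto_nhds_unique im_tendsto tendsto_const_nhds)

lemma isLittleO_sum_primes_of_tendsto_zero
    (hx : Tendsto x (atTop ⊓ 𝓟 {p | p.Prime}) (𝓝 0)) :
    (fun n ↦ ∑ p ∈ range (n + 1) with p.Prime, x p) =o[atTop]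
      fun n ↦ (Nat.primeCounting n : ℝ) := by
  have sum_one (n : ℕ) :
      ∑ p ∈ range (n + 1), (if p.Prime then (1 : ℝ) else 0) = Nat.primeCounting n := by
    rw [sum_boole, ← Nat.primesLE_eq_filter_range, Nat.primesLE_card_eq_primeCounting]
  have termwise : (fun p ↦ if p.Prime then x p else 0) =o[atTop]
      fun p ↦ if p.Prime then (1 : ℝ) else 0 := by
    refine Asymptotics.IsLittleO.of_bound fun ε hε ↦ ?_
    filter_upwards [eventually_inf_principal.mp (hx.norm.eventually_le_const (by simpa using hε))]
      with p hp
    split_ifs with prime_p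
    · simpa using hp prime_p
    · simp
  have sum_one_tendsto :
      Tendsto (fun n ↦ ∑ p ∈ range n, if p.Prime then (1 : ℝ) else 0) atTop atTop := by
    rw [← tendsto_add_atTop_iff_nat 1]
    simpa only [sum_one, Function.comp_def] using
      tendsto_natCast_atTop_atTop.comp Nat.tendsto_primeCounting
  have sums := (termwise.sum_range (fun p ↦ by positivity) sum_one_tendsto).comp_tendsto
    (tendsto_add_atTop_nat 1)
  simpa only [Function.comp_def, sum_one, sum_filter] using sums

lemma tendsto_primeAvg_zero (hx : Tendsto x (atTop ⊓ 𝓟 {p | p.Prime}) (𝓝 0)) :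
    Tendsto (primeAvg x) atTop (𝓝 0) := by
  have weight_isBigO : (fun n : ℕ ↦ ((Real.log n / n : ℝ) : ℂ)) =O[atTop]
      fun n : ℕ ↦ Real.log n / n :=
    Asymptotics.isBigO_of_le _ fun n ↦ (Complex.norm_real _).le
  rw [← Asymptotics.isLittleO_one_iff ℝ]
  exact (weight_isBigO.mul_isLittleO (isLittleO_sum_primes_of_tendsto_zero hx)).trans_isBigO
    isBigO_log_div_mul_primeCounting_one

lemma eq_of_tendsto_primeAvg (hx : Tendsto x (atTop ⊓ 𝓟 {p | p.Prime}) (𝓝 A))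
    (hL : Tendsto (primeAvg x) atTop (𝓝 L)) : L = A := by
  have sub_tendsto : Tendsto (primeAvg fun p ↦ x p - A) atTop (𝓝 0) :=
    tendsto_primeAvg_zero (by simpa using hx.sub_const A)
  have mul_tendsto : Tendsto (fun n ↦ A * primeAvg (fun _ ↦ 1) n) atTop (𝓝 L) := by
    simpa [primeAvg_sub_const] using hL.sub sub_tendsto
  rcases eq_or_ne A 0 with rfl | hA
  · exact tendsto_nhds_unique mul_tendsto (by simp)
  · have one_tendsto : Tendsto (primeAvg fun _ ↦ 1) atTop (𝓝 (L / A)) :=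
      (mul_tendsto.div_const A).congr fun n ↦ mul_div_cancel_left₀ _ hA
    exact (div_eq_one_iff_eq hA).mp (eq_one_of_tendsto_primeAvg_one one_tendsto)

lemma tendsto_primes_of_norm_sub_le_div {K : ℝ}
    (hx : ∀ p, p.Prime → ‖A - x p‖ ≤ K / p) :
    Tendsto x (atTop ⊓ 𝓟 {p | p.Prime}) (𝓝 A) := by
  rw [tendsto_iff_norm_sub_tendsto_zero]
  refine squeeze_zero' (Eventually.of_forall fun _ ↦ norm_nonneg _) ?_
    ((tendsto_const_div_atTop_nhds_zero_nat K).mono_left inf_le_left)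
  exact eventually_inf_principal.mpr (Eventually.of_forall fun p hp ↦ norm_sub_rev A _ ▸ hx p hp)

end PrimeAverage

section LogarithmicAverage

lemma tendsto_sum_Icc_inv_atTop :
    Tendsto (fun n : ℕ ↦ ∑ m ∈ Icc 1 n, (m : ℝ)⁻¹) atTop atTop := by
  have log_tendsto : Tendsto (fun n : ℕ ↦ Real.log (n + 1 : ℕ)) atTop atTop :=
    (Real.tendsto_log_atTop.comp tendsto_natCast_atTop_atTop).comp (tendsto_add_atTop_nat 1)
  refine tendsto_atTop_mono (fun n ↦ ?_) log_tendsto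
  simpa [harmonic_eq_sum_Icc] using log_add_one_le_harmonic n

lemma logAvgIcc_sub_const_mul (N : ℕ → ℕ) (u v : ℕ → ℂ) (c : ℂ) (k : ℕ) :
    logAvgIcc N (fun m ↦ u m - c * v m) k = logAvgIcc N u k - c * logAvgIcc N v k := by
  simp only [logAvgIcc, sub_div, sum_sub_distrib, mul_sub, mul_div_assoc, ← mul_sum]
  ring

lemma norm_le_of_tendsto_logAvgIcc {l : Filter ℕ} [l.NeBot] {N : ℕ → ℕ} (hN : Tendsto N l atTop)
    {u : ℕ → ℂ} {L : ℂ} (hL : Tendsto (logAvgIcc N u) l (𝓝 L)) {a δ : ℝ}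
    (hu : ∀ n, ∑ m ∈ Icc 1 n, ‖u m‖ / m ≤ a + δ * ∑ m ∈ Icc 1 n, (m : ℝ)⁻¹) : ‖L‖ ≤ δ := by
  set H : ℕ → ℝ := fun k ↦ ∑ m ∈ Icc 1 (N k), (m : ℝ)⁻¹
  have H_tendsto : Tendsto H l atTop := tendsto_sum_Icc_inv_atTop.comp hN
  have bound_tendsto : Tendsto (fun k ↦ (H k)⁻¹ * a + δ) l (𝓝 δ) := by
    simpa using (H_tendsto.inv_tendsto_atTop.mul_const a).add_const δ
  refine le_of_tendsto_of_tendsto hL.norm bound_tendsto ?_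
  filter_upwards [H_tendsto.eventually_gt_atTop 0] with k hk
  calc ‖logAvgIcc N u k‖ = (H k)⁻¹ * ‖∑ m ∈ Icc 1 (N k), u m / m‖ := by
        rw [logAvgIcc, norm_mul, norm_inv, Complex.norm_real, Real.norm_of_nonneg hk.le]
    _ ≤ (H k)⁻¹ * ∑ m ∈ Icc 1 (N k), ‖u m‖ / m := by
        gcongr
        exact (norm_sum_le _ _).trans_eq (by simp)
    _ ≤ (H k)⁻¹ * (a + δ * H k) := by
        gcongr
        exact hu (N k)
    _ = (H k)⁻¹ * a + δ := by field_simp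

lemma injOn_pred_div_of_modEq {S : Set ℕ} {q : ℕ} (hpos : ∀ m ∈ S, 0 < m)
    (hmod : ∀ a ∈ S, ∀ b ∈ S, a ≡ b [MOD q]) : Set.InjOn (fun m ↦ (m - 1) / q) S := by
  intro a ha b hb (quot_eq : (a - 1) / q = (b - 1) / q)
  have rem_eq : a - 1 ≡ b - 1 [MOD q] := by
    refine Nat.ModEq.add_right_cancel' 1 ?_
    rw [Nat.sub_add_cancel (hpos a ha), Nat.sub_add_cancel (hpos b hb)]
    exact hmod a ha b hb
  have pred_eq : a - 1 = b - 1 := by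
    rw [← Nat.div_add_mod (a - 1) q, ← Nat.div_add_mod (b - 1) q, quot_eq, rem_eq]
  have := hpos a ha
  have := hpos b hb
  omega

lemma sum_inv_le_of_modEq {S : Finset ℕ} {n q : ℕ} (hS : S ⊆ Icc 1 n)
    (hmod : ∀ a ∈ S, ∀ b ∈ S, a ≡ b [MOD q]) :
    ∑ m ∈ S, (m : ℝ)⁻¹ ≤ 1 + (∑ m ∈ Icc 1 n, (m : ℝ)⁻¹) / q := by
  have one_le {m : ℕ} (hm : m ∈ S) : 1 ≤ m := (mem_Icc.mp (hS hm)).1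
  -- `w i` bounds the reciprocal of the element of `S` in `(i * q, (i + 1) * q]`, if there is one.
  set w : ℕ → ℝ := fun i ↦ if i = 0 then 1 else (i : ℝ)⁻¹ / q with hw
  have inv_le {m : ℕ} (hm : m ∈ S) : (m : ℝ)⁻¹ ≤ w ((m - 1) / q) := by
    simp only [hw]
    split_ifs with quot_eq
    · exact inv_le_one_of_one_le₀ (by exact_mod_cast one_le hm)
    · rw [div_eq_mul_inv, ← mul_inv]
      have quot_mul_le : (m - 1) / q * q ≤ m := (Nat.div_mul_le_self _ _).trans (Nat.sub_le m 1)
      have q_ne : q ≠ 0 := by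
        rintro rfl
        exact quot_eq (Nat.div_zero _)
      exact inv_anti₀ (by positivity) (by exact_mod_cast quot_mul_le)
  have image_subset : S.image (fun m ↦ (m - 1) / q) ⊆ range (n + 1) := by
    refine image_subset_iff.mpr fun m hm ↦ mem_range.mpr (Nat.lt_succ_of_le ?_)
    exact (Nat.div_le_self _ _).trans ((Nat.sub_le m 1).trans (mem_Icc.mp (hS hm)).2)
  calc ∑ m ∈ S, (m : ℝ)⁻¹ ≤ ∑ m ∈ S, w ((m - 1) / q) := sum_le_sum fun _ ↦ inv_le
    _ = ∑ i ∈ S.image (fun m ↦ (m - 1) / q), w i :=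
        (sum_image (injOn_pred_div_of_modEq (fun _ ↦ one_le) hmod)).symm
    _ ≤ ∑ i ∈ range (n + 1), w i :=
        sum_le_sum_of_subset_of_nonneg image_subset fun i _ _ ↦ by positivity
    _ = 1 + (∑ m ∈ Icc 1 n, (m : ℝ)⁻¹) / q := by
        rw [sum_range_succ', add_comm, sum_div, ← Ico_add_one_right_eq_Icc, sum_Ico_eq_sum_range]
        simp [hw, add_comm]

end LogarithmicAverage

section Dilation

variable {ι : Type*} [Fintype ι]

lemma sum_norm_div_le_of_support_dvd_add {u : ℕ → ℂ} {M : ℝ} {q : ℕ} {shift : ι → ℕ}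
    (hM : ∀ m, ‖u m‖ ≤ M) (hu : ∀ m, (∀ j, ¬ q ∣ m + shift j) → u m = 0) (n : ℕ) :
    ∑ m ∈ Icc 1 n, ‖u m‖ / m ≤
      M * Fintype.card ι + M * Fintype.card ι / q * ∑ m ∈ Icc 1 n, (m : ℝ)⁻¹ := by
  have M_nonneg : 0 ≤ M := (norm_nonneg _).trans (hM 0)
  have pointwise (m : ℕ) : ‖u m‖ ≤ ∑ j, if q ∣ m + shift j then M else 0 := by
    by_cases h : ∃ j, q ∣ m + shift j
    · obtain ⟨j, hj⟩ := h
      calc ‖u m‖ ≤ if q ∣ m + shift j then M else 0 := by simpa [hj] using hM m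
        _ ≤ _ := single_le_sum (f := fun j ↦ if q ∣ m + shift j then M else 0)
            (fun _ _ ↦ by positivity) (mem_univ j)
    · rw [hu m (not_exists.mp h), norm_zero]
      positivity
  have class_sum_le (j : ι) : ∑ m ∈ Icc 1 n with q ∣ m + shift j, (m : ℝ)⁻¹ ≤
      1 + (∑ m ∈ Icc 1 n, (m : ℝ)⁻¹) / q :=
    sum_inv_le_of_modEq (filter_subset _ _) fun a ha b hb ↦ Nat.ModEq.add_right_cancel' (shift j)
      ((Nat.modEq_zero_iff_dvd.mpr (mem_filter.mp ha).2).trans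
        (Nat.modEq_zero_iff_dvd.mpr (mem_filter.mp hb).2).symm)
  calc ∑ m ∈ Icc 1 n, ‖u m‖ / m
      ≤ ∑ m ∈ Icc 1 n, (∑ j, if q ∣ m + shift j then M else 0) / m := by
        gcongr with m
        exact pointwise m
    _ = M * ∑ j, ∑ m ∈ Icc 1 n with q ∣ m + shift j, (m : ℝ)⁻¹ := by
        simp only [sum_div, mul_sum, sum_filter, ite_div, zero_div, mul_ite, mul_zero,
          ← div_eq_mul_inv]
        exact sum_comm
    _ ≤ M * ∑ _j : ι, (1 + (∑ m ∈ Icc 1 n, (m : ℝ)⁻¹) / q) := by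
        gcongr with j
        exact class_sum_le j
    _ = M * Fintype.card ι + M * Fintype.card ι / q * ∑ m ∈ Icc 1 n, (m : ℝ)⁻¹ := by
        rw [sum_const, card_univ, nsmul_eq_mul]
        ring

variable {f : ι → ℕ → ℂ} {shift : ι → ℕ}

lemma prod_shift_eq_conj_mul_prod_dilate {p m : ℕ} (hp : ∀ j, ‖f j p‖ = 1)
    (hmul : ∀ j, f j (p * (m + shift j)) = f j p * f j (m + shift j)) :
    ∏ j, f j (m + shift j) =
      (∏ j, starRingEnd ℂ (f j p)) * ∏ j, f j (p * m + p * shift j) := by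
  rw [← prod_mul_distrib]
  refine prod_congr rfl fun j _ ↦ ?_
  rw [← mul_add, hmul, ← mul_assoc, Complex.conj_mul', hp]
  simp

lemma norm_prod_shift_sub_conj_mul_prod_dilate_le {C : ι → ℝ} (hC : ∀ j n, ‖f j n‖ ≤ C j)
    {p : ℕ} (hp : ∀ j, ‖f j p‖ = 1) (m : ℕ) :
    ‖∏ j, f j (m + shift j) -
      (∏ j, starRingEnd ℂ (f j p)) * ∏ j, f j (p * m + p * shift j)‖ ≤ 2 * ∏ j, C j := by
  have norm_prod_le (x : ι → ℕ) : ‖∏ j, f j (x j)‖ ≤ ∏ j, C j := by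
    rw [norm_prod]
    exact prod_le_prod (fun _ _ ↦ norm_nonneg _) fun j _ ↦ hC j (x j)
  have norm_conj_prod : ‖∏ j, starRingEnd ℂ (f j p)‖ = 1 := by simp [hp]
  calc _ ≤ ‖∏ j, f j (m + shift j)‖ +
          ‖(∏ j, starRingEnd ℂ (f j p)) * ∏ j, f j (p * m + p * shift j)‖ := norm_sub_le _ _
    _ ≤ ∏ j, C j + ∏ j, C j := by
        rw [norm_mul, norm_conj_prod, one_mul]
        exact add_le_add (norm_prod_le _) (norm_prod_le _)
    _ = 2 * ∏ j, C j := (two_mul _).symm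

lemma norm_logMean_sub_conj_mul_logMean_dilate_le {C : ι → ℝ} (hC : ∀ j n, ‖f j n‖ ≤ C j)
    {p : ℕ} (hp : ∀ j, ‖f j p‖ = 1) (hmul : ∀ j m, ¬ p ∣ m → f j (p * m) = f j p * f j m)
    {l : Filter ℕ} [l.NeBot] {N : ℕ → ℕ} (hN : Tendsto N l atTop) {A D : ℂ}
    (hA : Tendsto (logAvgIcc N fun m ↦ ∏ j, f j (m + shift j)) l (𝓝 A))
    (hD : Tendsto (logAvgIcc N fun m ↦ ∏ j, f j (p * m + p * shift j)) l (𝓝 D)) :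
    ‖A - (∏ j, starRingEnd ℂ (f j p)) * D‖ ≤ 2 * (∏ j, C j) * Fintype.card ι / p := by
  have sub_tendsto := (hA.sub (hD.const_mul (∏ j, starRingEnd ℂ (f j p)))).congr fun k ↦
    (logAvgIcc_sub_const_mul N _ _ _ k).symm
  refine norm_le_of_tendsto_logAvgIcc hN sub_tendsto (sum_norm_div_le_of_support_dvd_add
    (shift := shift) (norm_prod_shift_sub_conj_mul_prod_dilate_le hC hp) fun m hm ↦ ?_)
  exact sub_eq_zero.mpr (prod_shift_eq_conj_mul_prod_dilate hp fun j ↦ hmul j _ (hm j))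

theorem multiplicative_prime_dilation_identity_general
    (hmult : ∀ j m n, Nat.Coprime m n → f j (m * n) = f j m * f j n)
    {C : ι → ℝ} (hC : ∀ j n, ‖f j n‖ ≤ C j)
    (hunim : ∀ j p, Nat.Prime p → ‖f j p‖ = 1)
    {l : Filter ℕ} [l.NeBot] {N : ℕ → ℕ} (hN : Tendsto N l atTop) {A : ℂ}
    (hA : Tendsto (logAvgIcc N fun m ↦ ∏ j, f j (m + shift j)) l (𝓝 A)) {D : ℕ → ℂ}
    (hD : ∀ p, Nat.Prime p →
      Tendsto (logAvgIcc N fun m ↦ ∏ j, f j (p * m + p * shift j)) l (𝓝 (D p))) {LD : ℂ}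
    (hLD : Tendsto (primeAvg fun p ↦ (∏ j, starRingEnd ℂ (f j p)) * D p) atTop (𝓝 LD)) :
    A = LD ∧ ∀ p, Nat.Prime p →
      ‖A - (∏ j, starRingEnd ℂ (f j p)) * D p‖ ≤ 2 * (∏ j, C j) * Fintype.card ι / p := by
  have dilation_bound (p : ℕ) (hp : p.Prime) :
      ‖A - (∏ j, starRingEnd ℂ (f j p)) * D p‖ ≤ 2 * (∏ j, C j) * Fintype.card ι / p :=
    norm_logMean_sub_conj_mul_logMean_dilate_le hC (hunim · p hp)
      (fun j m hm ↦ hmult j p m (hp.coprime_iff_not_dvd.mpr hm)) hN hA (hD p hp)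
  exact ⟨(eq_of_tendsto_primeAvg (tendsto_primes_of_norm_sub_le_div dilation_bound) hLD).symm,
    dilation_bound⟩

end Dilation

/-- Corollary 2.10 of the paper: for bounded multiplicative functions `f₁,…,f_s` with
`|f_j(p)| = 1` at primes, assuming all relevant logarithmic limits exist and assuming
Tao's identity (`LD = LB` below),
`𝔼^{log}_{m∈I} ∏ f_j(m+n_j) = 𝔼_{p∈ℙ} c_p 𝔼^{log}_{m∈I} ∏ f_j(m+p n_j)` with
`c_p = ∏ conj(f_j(p))`; and in particular, for each prime `p`,
`𝔼^{log}_{m∈I} ∏ f_j(m+n_j) = c_p ⋅ 𝔼^{log}_{m∈I} ∏ f_j(pm+p n_j) + O(1/p)`. -/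
theorem multiplicative_prime_dilation_identity
    (s : ℕ) (hs : 1 ≤ s) (f : Fin s → ℕ → ℂ)
    (hmult : ∀ j m n, Nat.Coprime m n → f j (m * n) = f j m * f j n)
    (hbd : ∀ j, ∃ C : ℝ, ∀ n, ‖f j n‖ ≤ C)
    (hunim : ∀ j p, Nat.Prime p → ‖f j p‖ = 1)
    (nn : Fin s → ℕ) (hnn : ∀ j, 0 < nn j)
    (N : ℕ → ℕ) (hN : StrictMono N)
    (A : ℂ)
    (hA : Tendsto (logAvgIcc N fun m => ∏ j, f j (m + nn j)) atTop (𝓝 A))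
    (B D : ℕ → ℂ)
    (hB : ∀ p, Nat.Prime p →
      Tendsto (logAvgIcc N fun m => ∏ j, f j (m + p * nn j)) atTop (𝓝 (B p)))
    (hD : ∀ p, Nat.Prime p →
      Tendsto (logAvgIcc N fun m => ∏ j, f j (p * m + p * nn j)) atTop (𝓝 (D p)))
    (LB LD : ℂ)
    (hLB : Tendsto (primeAvg fun p => (∏ j, (starRingEnd ℂ) (f j p)) * B p) atTop (𝓝 LB))
    (hLD : Tendsto (primeAvg fun p => (∏ j, (starRingEnd ℂ) (f j p)) * D p) atTop (𝓝 LD))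
    (hTao : LD = LB) :
    A = LB ∧
      ∃ K : ℝ, ∀ p, Nat.Prime p →
        ‖A - (∏ j, (starRingEnd ℂ) (f j p)) * D p‖ ≤ K / p := by
  choose C hC using hbd
  obtain ⟨A_eq, bound⟩ :=
    multiplicative_prime_dilation_identity_general hmult hC hunim hN.tendsto_atTop hA hD hLD
  exact ⟨A_eq.trans hTao, _, bound⟩
end

section
/- There exists a bounded sequence b : ℕ → {−1, 1}, namely b(n) = (−1)^{n+k} for n ∈ [k², (k+1)²), such that the Gowers norms of its truncations vanish in the limit, lim_{N→∞} ‖b·1_{[N]} (extended periodically to ℤ_N)‖_{U^s(ℤ_N)} = 0 for every s ∈ ℕ, while the local uniformity seminorm on I = ([N])_{N∈ℕ} satisfies ‖b‖_{U^2(I)} = 1. -/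
open Filter Finset Topology

/-- Gowers uniformity norm `U^s(ℤ_L)` of the `L`-periodic sequence `n ↦ a (n % L)`. -/
noncomputable def gowersNorm (L : ℕ) : ℕ → (ℕ → ℂ) → ℝ
  | 0, _ => 0
  | 1, a => ‖(L : ℂ)⁻¹ * ∑ m ∈ Finset.range L, a (m % L)‖
  | (s + 2), a =>
      ((L : ℝ)⁻¹ * ∑ h ∈ Finset.range L,
        gowersNorm L (s + 1)
          (fun n => a ((n + h) % L) * (starRingEnd ℂ) (a (n % L))) ^ (2 ^ (s + 1)))
        ^ (((2 : ℝ) ^ (s + 2))⁻¹)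

/-!
Write `b(n) = (-1)^n g(√n)` with `g` the square wave of period `2`.

*Gowers uniformity.* Approximating `g` in `L¹` by trigonometric polynomials without even
frequencies, it suffices to treat the phases `e^{iπ(m√n + n)}` with `m` odd. All differences of
`√n` have alternating signs and are not too small, and this property passes to the differences
`φ(n) - φ(n + k)` of a phase `φ`; it is insensitive to the linear term as soon as one difference
has been taken. Differentiating repeatedly, the `U^{s+1}` norm is reduced to averages of exponential
sums with monotone derivative, which the Kuzmin–Landau inequality bounds.

*Local uniformity.* Inside a block `[k², (k + 1)²)` the sequence `b` is `±(-1)^n`, so a fixed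
parallelogram product equals `1` except near the squares, which have density zero.
-/

section

open scoped BigOperators ComplexConjugate fwdDiff Real

/-! ### Gowers powers on finite abelian groups -/

section GowersPow

variable {G : Type*} [AddCommGroup G]

/-- The multiplicative derivative `Δ_h f (x) = f (x + h) * conj (f x)`. -/
def mulDeriv (h : G) (f : G → ℂ) : G → ℂ := fun x => f (x + h) * conj (f x)

lemma mulDeriv_const_mul (h : G) (c : ℂ) (f : G → ℂ) :
    mulDeriv h (fun x => c * f x) = fun x => (‖c‖ ^ 2 : ℝ) * mulDeriv h f x := by
  funext x
  simp only [mulDeriv, map_mul, Complex.ofReal_pow, ← Complex.mul_conj']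
  ring

lemma mulDeriv_conj (h : G) (f : G → ℂ) :
    mulDeriv h (fun x => conj (f x)) = fun x => conj (mulDeriv h f x) := by
  funext x
  simp only [mulDeriv, map_mul]

lemma mulDeriv_comp_add (h t : G) (f : G → ℂ) :
    mulDeriv h (fun x => f (x + t)) = fun x => mulDeriv h f (x + t) := by
  funext x
  simp only [mulDeriv, add_right_comm x h t]

lemma mulDeriv_neg (h : G) (f : G → ℂ) :
    mulDeriv (-h) f = fun x => conj (mulDeriv h f (x + -h)) := by
  funext x
  simp only [mulDeriv, map_mul, Complex.conj_conj, neg_add_cancel_right, mul_comm]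

lemma mulDeriv_shift_mul_conj (k h : G) (f g : G → ℂ) :
    mulDeriv k (fun x => f (x + h) * conj (g x)) =
      fun x => mulDeriv k f (x + h) * conj (mulDeriv k g x) := by
  funext x
  simp only [mulDeriv, map_mul, Complex.conj_conj, add_right_comm x k h]
  ring

lemma mulDeriv_add (h : G) (f g : G → ℂ) :
    mulDeriv h (f + g) = (mulDeriv h f + mulDeriv h g) +
      ((fun x => f (x + h) * conj (g x)) + fun x => g (x + h) * conj (f x)) := by
  funext x
  simp only [mulDeriv, Pi.add_apply, map_add]
  ring

lemma norm_mulDeriv (h : G) (f : G → ℂ) (x : G) : ‖mulDeriv h f x‖ = ‖f (x + h)‖ * ‖f x‖ := by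
  rw [mulDeriv, norm_mul, RCLike.norm_conj]

variable [Fintype G]

/-- The power `‖f‖_{U^{s+1}(G)} ^ (2 ^ (s+1))` of the Gowers uniformity norm of order `s + 1`;
the index is shifted so that the recursion starts at the seminorm `U¹`. -/
noncomputable def gowersPow : ℕ → (G → ℂ) → ℝ
  | 0, f => ‖𝔼 x, f x‖ ^ 2
  | s + 1, f => 𝔼 h, gowersPow s (mulDeriv h f)

lemma gowersPow_zero (f : G → ℂ) : gowersPow 0 f = ‖𝔼 x, f x‖ ^ 2 := rfl

lemma gowersPow_succ (s : ℕ) (f : G → ℂ) :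
    gowersPow (s + 1) f = 𝔼 h, gowersPow s (mulDeriv h f) := rfl

lemma gowersPow_nonneg (s : ℕ) (f : G → ℂ) : 0 ≤ gowersPow s f := by
  induction s generalizing f with
  | zero => exact sq_nonneg _
  | succ s ih => exact expect_nonneg fun h _ => ih _

lemma expect_comp_add {M : Type*} [AddCommMonoid M] [Module ℚ≥0 M] (f : G → M) (t : G) :
    𝔼 x, f (x + t) = 𝔼 x, f x :=
  Fintype.expect_equiv (Equiv.addRight t) _ _ fun _ => rfl

lemma gowersPow_const_mul (s : ℕ) (c : ℂ) (f : G → ℂ) :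
    gowersPow s (fun x => c * f x) = ‖c‖ ^ 2 ^ (s + 1) * gowersPow s f := by
  induction s generalizing c f with
  | zero => simp only [gowersPow_zero, ← mul_expect, norm_mul, mul_pow, zero_add, pow_one]
  | succ s ih =>
    simp only [gowersPow_succ, mulDeriv_const_mul, ih, ← mul_expect, Complex.norm_real, norm_pow,
      norm_norm, ← pow_mul, ← pow_succ']

lemma gowersPow_conj (s : ℕ) (f : G → ℂ) : gowersPow s (fun x => conj (f x)) = gowersPow s f := by
  induction s generalizing f with
  | zero => simp only [gowersPow_zero, ← map_expect, RCLike.norm_conj]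
  | succ s ih => simp only [gowersPow_succ, mulDeriv_conj, ih]

lemma gowersPow_comp_add (s : ℕ) (t : G) (f : G → ℂ) :
    gowersPow s (fun x => f (x + t)) = gowersPow s f := by
  induction s generalizing f with
  | zero => rw [gowersPow_zero, gowersPow_zero, expect_comp_add f t]
  | succ s ih => simp only [gowersPow_succ, mulDeriv_comp_add, ih]

lemma gowersPow_mulDeriv_neg (s : ℕ) (h : G) (f : G → ℂ) :
    gowersPow s (mulDeriv (-h) f) = gowersPow s (mulDeriv h f) := by
  rw [mulDeriv_neg, gowersPow_conj s (fun x => mulDeriv h f (x + -h)), gowersPow_comp_add]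

lemma gowersPow_le_expect_norm {f : G → ℂ} {B : ℝ} (s : ℕ) (hf : ∀ x, ‖f x‖ ≤ B) :
    gowersPow s f ≤ B ^ (2 ^ (s + 1) - 1) * 𝔼 x, ‖f x‖ := by
  have hB : 0 ≤ B := (norm_nonneg _).trans (hf 0)
  induction s generalizing f B with
  | zero =>
    have hmean : ‖𝔼 x, f x‖ ≤ 𝔼 x, ‖f x‖ := RCLike.norm_expect_le (K := ℂ)
    have hle : 𝔼 x, ‖f x‖ ≤ B := expect_le univ_nonempty fun x _ => hf x
    rw [gowersPow_zero, sq, zero_add, pow_one, Nat.add_one_sub_one, pow_one]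
    exact mul_le_mul (hmean.trans hle) hmean (norm_nonneg _) hB
  | succ s ih =>
    have hderiv (h : G) : gowersPow s (mulDeriv h f)
        ≤ (B ^ 2) ^ (2 ^ (s + 1) - 1) * (B * 𝔼 x, ‖f x‖) := by
      refine (ih (fun x => ?_) (sq_nonneg B)).trans ?_
      · rw [norm_mulDeriv, sq]
        exact mul_le_mul (hf _) (hf _) (norm_nonneg _) hB
      · rw [mul_expect _ _ B]
        gcongr with x
        rw [norm_mulDeriv]
        gcongr
        exact hf _
    have hexp : 2 ^ (s + 1 + 1) - 1 = 2 * (2 ^ (s + 1) - 1) + 1 := by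
      have := Nat.one_le_two_pow (n := s + 1)
      omega
    refine (expect_le univ_nonempty fun h _ => hderiv h).trans_eq ?_
    rw [hexp, pow_succ B (2 * _), pow_mul, mul_assoc]

lemma expect_mul_conj_expect (f g : G → ℂ) :
    (𝔼 x, f x) * conj (𝔼 x, g x) = 𝔼 h, 𝔼 x, f (x + h) * conj (g x) := by
  have hshift (x : G) : 𝔼 h, f (x + h) = 𝔼 h, f h := by
    simpa only [add_comm x] using expect_comp_add f x
  rw [expect_comm]
  simp only [← expect_mul, hshift]
  rw [← mul_expect, map_expect]

lemma norm_expect_sq_eq_expect_mulDeriv (f : G → ℂ) :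
    ((‖𝔼 x, f x‖ ^ 2 : ℝ) : ℂ) = 𝔼 h, 𝔼 x, mulDeriv h f x := by
  rw [Complex.ofReal_pow, ← Complex.mul_conj', expect_mul_conj_expect]
  rfl

lemma expect_gowersPow_zero_shift_mul_conj (f g : G → ℂ) :
    ((𝔼 h, gowersPow 0 (fun x => f (x + h) * conj (g x)) : ℝ) : ℂ) =
      𝔼 k, (𝔼 x, mulDeriv k f x) * conj (𝔼 x, mulDeriv k g x) := by
  simp only [Complex.ofReal_expect, gowersPow_zero, norm_expect_sq_eq_expect_mulDeriv,
    mulDeriv_shift_mul_conj, expect_mul_conj_expect]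
  exact expect_comm _ _ _

lemma expect_gowersPow_shift_mul_conj_le (s : ℕ) (f g : G → ℂ) :
    𝔼 h, gowersPow s (fun x => f (x + h) * conj (g x)) ≤
      (gowersPow (s + 1) f + gowersPow (s + 1) g) / 2 := by
  induction s generalizing f g with
  | zero =>
    calc 𝔼 h, gowersPow 0 (fun x => f (x + h) * conj (g x))
        ≤ ‖((𝔼 h, gowersPow 0 (fun x => f (x + h) * conj (g x)) : ℝ) : ℂ)‖ := by
          rw [Complex.norm_real]
          exact Real.le_norm_self _
      _ ≤ 𝔼 k, ‖(𝔼 x, mulDeriv k f x) * conj (𝔼 x, mulDeriv k g x)‖ := by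
          rw [expect_gowersPow_zero_shift_mul_conj]
          exact RCLike.norm_expect_le (K := ℂ)
      _ ≤ 𝔼 k, (gowersPow 0 (mulDeriv k f) + gowersPow 0 (mulDeriv k g)) / 2 := by
          refine expect_le_expect fun k _ => ?_
          rw [norm_mul, RCLike.norm_conj, gowersPow_zero, gowersPow_zero]
          linarith [two_mul_le_add_sq ‖𝔼 x, mulDeriv k f x‖ ‖𝔼 x, mulDeriv k g x‖]
      _ = (gowersPow 1 f + gowersPow 1 g) / 2 := by
          rw [← expect_div, expect_add_distrib, ← gowersPow_succ, ← gowersPow_succ]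
  | succ s ih =>
    simp only [gowersPow_succ (s + 1), gowersPow_succ s (fun _ => _ * _), mulDeriv_shift_mul_conj]
    rw [expect_comm, ← expect_add_distrib, expect_div]
    exact expect_le_expect fun k _ => ih _ _

lemma gowersPow_add_le (s : ℕ) (f g : G → ℂ) :
    gowersPow s (f + g) ≤ 2 ^ (2 ^ (s + 1) - 1) * (gowersPow s f + gowersPow s g) := by
  induction s generalizing f g with
  | zero =>
    simp only [gowersPow_zero, Pi.add_apply, expect_add_distrib]
    calc ‖𝔼 x, f x + 𝔼 x, g x‖ ^ 2
        ≤ (‖𝔼 x, f x‖ + ‖𝔼 x, g x‖) ^ 2 := by gcongr; exact norm_add_le _ _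
      _ ≤ _ := by simpa using add_sq_le (a := ‖𝔼 x, f x‖) (b := ‖𝔼 x, g x‖)
  | succ s ih =>
    set C : ℝ := 2 ^ (2 ^ (s + 1) - 1)
    have hC : 2 ^ (2 ^ (s + 1 + 1) - 1) = C * C * 2 := by
      rw [← pow_add, ← pow_succ]
      congr 1
      have := Nat.one_le_two_pow (n := s + 1)
      omega
    have hderiv (h : G) : gowersPow s (mulDeriv h (f + g)) ≤
        C * C * ((gowersPow s (mulDeriv h f) + gowersPow s (mulDeriv h g)) +
          (gowersPow s (fun x => f (x + h) * conj (g x)) +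
            gowersPow s fun x => g (x + h) * conj (f x))) := by
      rw [mulDeriv_add, mul_assoc, mul_add C]
      refine (ih _ _).trans ?_
      gcongr <;> exact ih _ _
    refine (expect_le_expect fun h _ => hderiv h).trans ?_
    rw [hC, mul_assoc (C * C), ← mul_expect]
    gcongr
    simp only [expect_add_distrib, ← gowersPow_succ]
    linarith [expect_gowersPow_shift_mul_conj_le s f g, expect_gowersPow_shift_mul_conj_le s g f]

lemma sq_expect_le_expect_sq {ι : Type*} [Fintype ι] [Nonempty ι] (u : ι → ℝ) :
    (𝔼 x, u x) ^ 2 ≤ 𝔼 x, u x ^ 2 := by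
  simpa using expect_mul_sq_le_sq_mul_sq univ u 1

lemma gowersPow_sq_le_gowersPow_succ (s : ℕ) (f : G → ℂ) :
    gowersPow s f ^ 2 ≤ gowersPow (s + 1) f := by
  induction s generalizing f with
  | zero =>
    have hnorm : gowersPow 0 f ≤ 𝔼 h, ‖𝔼 x, mulDeriv h f x‖ := by
      rw [gowersPow_zero, ← Real.norm_of_nonneg (sq_nonneg ‖𝔼 x, f x‖), ← Complex.norm_real,
        norm_expect_sq_eq_expect_mulDeriv]
      exact RCLike.norm_expect_le (K := ℂ)
    exact (pow_le_pow_left₀ (gowersPow_nonneg 0 f) hnorm 2).trans (sq_expect_le_expect_sq _)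
  | succ s ih =>
    exact (sq_expect_le_expect_sq _).trans (expect_le_expect fun h _ => ih _)

end GowersPow

section GowersNull

variable {ι : Type*} {G : ι → Type*} [∀ i, AddCommGroup (G i)] [∀ i, Fintype (G i)]
  {l : Filter ι} {s : ℕ} {f g : ∀ i, G i → ℂ}

/-- A family of functions on finite abelian groups is Gowers-null of order `s` along `l` when its
`U^{s+1}` norms tend to zero along `l`. -/
def GowersNull (l : Filter ι) (s : ℕ) (f : ∀ i, G i → ℂ) : Prop :=
  Tendsto (fun i => gowersPow s (f i)) l (𝓝 0)

namespace GowersNull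

lemma of_eventually_le (h : ∀ ε > 0, ∀ᶠ i in l, gowersPow s (f i) ≤ ε) : GowersNull l s f := by
  refine tendsto_order.2 ⟨fun a ha => .of_forall fun i => ha.trans_le (gowersPow_nonneg _ _),
    fun a ha => ?_⟩
  filter_upwards [h (a / 2) (half_pos ha)] with i hi using hi.trans_lt (half_lt_self ha)

lemma zero : GowersNull l s (0 : ∀ i, G i → ℂ) := by
  refine of_eventually_le fun ε hε => .of_forall fun i => ?_
  calc gowersPow s (0 : G i → ℂ) ≤ 0 ^ (2 ^ (s + 1) - 1) * 𝔼 x, ‖(0 : G i → ℂ) x‖ :=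
        gowersPow_le_expect_norm s fun _ => norm_zero.le
    _ ≤ ε := by simpa using hε.le

lemma add (hf : GowersNull l s f) (hg : GowersNull l s g) : GowersNull l s (f + g) := by
  refine squeeze_zero (fun i => gowersPow_nonneg _ _) (fun i => gowersPow_add_le s (f i) (g i)) ?_
  simpa using (Tendsto.add hf hg).const_mul ((2 : ℝ) ^ (2 ^ (s + 1) - 1))

lemma const_smul (c : ℂ) (hf : GowersNull l s f) : GowersNull l s (c • f) := by
  refine (Tendsto.const_mul (‖c‖ ^ 2 ^ (s + 1)) hf).congr' (.of_forall fun i => ?_) |>.trans ?_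
  · exact (gowersPow_const_mul s c (f i)).symm
  · rw [mul_zero]

lemma of_succ (hf : GowersNull l (s + 1) f) : GowersNull l s f := by
  have hsq : Tendsto (fun i => gowersPow s (f i) ^ 2) l (𝓝 0) :=
    squeeze_zero (fun i => sq_nonneg _) (fun i => gowersPow_sq_le_gowersPow_succ s (f i)) hf
  simpa only [GowersNull, Real.sqrt_sq (gowersPow_nonneg s _), Real.sqrt_zero] using hsq.sqrt

lemma of_approx {B : ℝ}
    (h : ∀ η > 0, ∃ g : ∀ i, G i → ℂ, GowersNull l s g ∧
      ∀ᶠ i in l, (∀ x, ‖f i x - g i x‖ ≤ B) ∧ 𝔼 x, ‖f i x - g i x‖ ≤ η) :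
    GowersNull l s f := by
  refine of_eventually_le fun ε hε => ?_
  set C : ℝ := 2 ^ (2 ^ (s + 1) - 1)
  set D : ℝ := |B| ^ (2 ^ (s + 1) - 1)
  have hCD : 0 < C * (1 + D) := by positivity
  obtain ⟨g, hg, hfg⟩ := h (ε / (C * (1 + D))) (by positivity)
  filter_upwards [hg.eventually_le_const (u := ε / (C * (1 + D))) (by positivity), hfg]
    with i hgi ⟨hbound, hmean⟩
  have hdiff : gowersPow s (f i - g i) ≤ D * (ε / (C * (1 + D))) :=
    (gowersPow_le_expect_norm s fun x => (hbound x).trans (le_abs_self B)).trans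
      (mul_le_mul_of_nonneg_left hmean (by positivity))
  calc gowersPow s (f i) = gowersPow s (g i + (f i - g i)) := by rw [add_sub_cancel]
    _ ≤ C * (gowersPow s (g i) + gowersPow s (f i - g i)) := gowersPow_add_le _ _ _
    _ ≤ C * (ε / (C * (1 + D)) + D * (ε / (C * (1 + D)))) := by gcongr
    _ = ε / (C * (1 + D)) * (C * (1 + D)) := by ring
    _ = ε := div_mul_cancel₀ _ hCD.ne'

end GowersNull

end GowersNull

/-! ### Comparison with `gowersNorm` -/

section Comparison

/-- The `N`-periodic sequence agreeing with `a` on `[0, N)`, as a function on `ℤ/N`. -/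
def truncation (N : ℕ) (a : ℕ → ℂ) : ZMod N → ℂ := fun x => a x.val

lemma gowersNorm_nonneg (N s : ℕ) (a : ℕ → ℂ) : 0 ≤ gowersNorm N s a := by
  induction s using Nat.twoStepInduction generalizing a with
  | zero => rw [gowersNorm]
  | one => rw [gowersNorm]; exact norm_nonneg _
  | more s _ ih =>
    rw [gowersNorm]
    refine Real.rpow_nonneg (mul_nonneg (by positivity) (sum_nonneg fun h _ => ?_)) _
    exact pow_nonneg (ih _) _

lemma sum_zmod_val (N : ℕ) [NeZero N] {M : Type*} [AddCommMonoid M] (g : ℕ → M) :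
    ∑ x : ZMod N, g x.val = ∑ n ∈ range N, g n :=
  sum_bij' (fun x _ => x.val) (fun n _ => (n : ZMod N)) (fun x _ => mem_range.2 x.val_lt)
    (fun _ _ => mem_univ _) (fun x _ => ZMod.natCast_zmod_val x)
    (fun _ hn => ZMod.val_cast_of_lt (mem_range.1 hn)) fun _ _ => rfl

lemma inv_mul_sum_range_mod_eq_expect {K : Type*} [Semifield K] [CharZero K] (N : ℕ) [NeZero N]
    (g : ℕ → K) : (N : K)⁻¹ * ∑ n ∈ range N, g (n % N) = 𝔼 x : ZMod N, g x.val := by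
  rw [Fintype.expect_eq_sum_div_card, ZMod.card, sum_zmod_val, div_eq_inv_mul]
  congr 1
  exact sum_congr rfl fun n hn => by rw [Nat.mod_eq_of_lt (mem_range.1 hn)]

lemma gowersNorm_pow (N s : ℕ) [NeZero N] (a : ℕ → ℂ) :
    gowersNorm N (s + 1) a ^ 2 ^ (s + 1) = gowersPow s (truncation N a) := by
  induction s generalizing a with
  | zero =>
    rw [gowersNorm, gowersPow_zero, inv_mul_sum_range_mod_eq_expect, zero_add, pow_one]
    rfl
  | succ s ih =>
    have hderiv (h : ℕ) : gowersNorm N (s + 1)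
        (fun n => a ((n + h) % N) * conj (a (n % N))) ^ 2 ^ (s + 1) =
          gowersPow s (mulDeriv ((h % N : ℕ) : ZMod N) (truncation N a)) := by
      rw [ih]
      congr 1
      funext x
      simp only [mulDeriv, truncation, ZMod.val_add, ZMod.val_natCast, Nat.mod_mod, Nat.add_mod_mod,
        Nat.mod_eq_of_lt x.val_lt]
    have hnn : 0 ≤ gowersPow (s + 1) (truncation N a) := gowersPow_nonneg _ _
    rw [gowersNorm]
    simp only [hderiv]
    rw [inv_mul_sum_range_mod_eq_expect N fun h => gowersPow s (mulDeriv (h : ZMod N) _)]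
    simp only [ZMod.natCast_zmod_val]
    rw [← gowersPow_succ]
    exact_mod_cast Real.rpow_inv_natCast_pow hnn (pow_ne_zero (s + 2) two_ne_zero)

lemma GowersNull.tendsto_gowersNorm {s : ℕ} {a : ℕ → ℂ}
    (h : GowersNull atTop s fun N => truncation (N + 1) a) :
    Tendsto (fun N => gowersNorm N (s + 1) a) atTop (𝓝 0) := by
  rw [← tendsto_add_atTop_iff_nat 1]
  have hroot := h.rpow_const (p := ((2 ^ (s + 1) : ℕ) : ℝ)⁻¹) (.inr (by positivity))
  rw [Real.zero_rpow (by positivity)] at hroot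
  refine hroot.congr fun N => ?_
  rw [← gowersNorm_pow, Real.pow_rpow_inv_natCast (gowersNorm_nonneg _ _ a)
    (pow_ne_zero (s + 1) two_ne_zero)]

end Comparison

/-! ### The Kuzmin–Landau inequality -/

section KuzminLandau

lemma half_le_norm_circleExp_sub_one {θ : ℝ} (h₀ : 0 ≤ θ) (h₁ : θ ≤ π) :
    θ / 2 ≤ ‖(Circle.exp θ : ℂ) - 1‖ := by
  have hsin : 2 / π * (θ / 2) ≤ Real.sin (θ / 2) := Real.mul_le_sin (by linarith) (by linarith)
  have hpi : 1 / 2 ≤ 2 / π := by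
    rw [div_le_div_iff₀ two_pos Real.pi_pos]
    linarith [Real.pi_le_four]
  rw [Circle.coe_exp, mul_comm, Complex.norm_exp_I_mul_ofReal_sub_one, Real.norm_eq_abs]
  calc θ / 2 = 2 * (1 / 2 * (θ / 2)) := by ring
    _ ≤ 2 * (2 / π * (θ / 2)) := by gcongr
    _ ≤ 2 * Real.sin (θ / 2) := by gcongr
    _ ≤ _ := le_abs_self _

lemma circleExp_sub_one_ne_zero {θ : ℝ} (h₀ : 0 < θ) (h₁ : θ ≤ π) :
    (Circle.exp θ : ℂ) - 1 ≠ 0 :=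
  norm_pos_iff.1 ((half_pos h₀).trans_le (half_le_norm_circleExp_sub_one h₀.le h₁))

lemma norm_inv_circleExp_sub_one_le {θ : ℝ} (h₀ : 0 < θ) (h₁ : θ ≤ π) :
    ‖((Circle.exp θ : ℂ) - 1)⁻¹‖ ≤ 2 / θ := by
  rw [norm_inv, ← inv_div]
  exact inv_anti₀ (half_pos h₀) (half_le_norm_circleExp_sub_one h₀.le h₁)

lemma circleExp_sub_circleExp (x y : ℝ) :
    (Circle.exp y : ℂ) - Circle.exp x = Circle.exp x * (Circle.exp (y - x) - 1) := by
  rw [mul_sub, ← Circle.coe_mul, ← Circle.exp_add, add_sub_cancel, mul_one]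

lemma norm_circleExp_sub_circleExp_le (x y : ℝ) :
    ‖(Circle.exp y : ℂ) - Circle.exp x‖ ≤ |y - x| := by
  rw [circleExp_sub_circleExp, norm_mul, Circle.norm_coe, one_mul, Circle.coe_exp, mul_comm]
  exact Real.norm_exp_I_mul_ofReal_sub_one_le

lemma norm_inv_circleExp_sub_one_sub_le {p q : ℝ} (hq : 0 < q) (hqp : q ≤ p) (hp : p ≤ π) :
    ‖((Circle.exp p : ℂ) - 1)⁻¹ - ((Circle.exp q : ℂ) - 1)⁻¹‖ ≤ 4 / q - 4 / p := by
  have hp₀ : 0 < p := hq.trans_le hqp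
  have hnum : ‖(Circle.exp q : ℂ) - 1 - (Circle.exp p - 1)‖ ≤ p - q := by
    rw [sub_sub_sub_cancel_right, ← abs_of_nonneg (sub_nonneg.2 hqp), abs_sub_comm]
    exact norm_circleExp_sub_circleExp_le p q
  rw [inv_sub_inv (circleExp_sub_one_ne_zero hp₀ hp) (circleExp_sub_one_ne_zero hq (hqp.trans hp)),
    norm_div, norm_mul]
  calc _ ≤ (p - q) / ((p / 2) * (q / 2)) := by
        gcongr
        · exact half_le_norm_circleExp_sub_one hp₀.le hp
        · exact half_le_norm_circleExp_sub_one hq.le (hqp.trans hp)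
    _ = 4 / q - 4 / p := by field_simp; ring

lemma circleExp_eq_sub_mul_inv {x y : ℝ} (h₀ : 0 < y - x) (h₁ : y - x ≤ π) :
    (Circle.exp x : ℂ) = (Circle.exp y - Circle.exp x) * (Circle.exp (y - x) - 1 : ℂ)⁻¹ := by
  rw [circleExp_sub_circleExp, mul_inv_cancel_right₀ (circleExp_sub_one_ne_zero h₀ h₁)]

variable {φ : ℕ → ℝ}

/- Abel summation: each term is the difference `e(φ (n + 1)) - e(φ n)` divided by
`e(φ (n + 1) - φ n) - 1`, and these denominators vary monotonically. -/
lemma norm_sum_circleExp_sub_boundary_le (M : ℕ)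
    (hpos : ∀ n ≤ M, 0 < φ (n + 1) - φ n) (hle : ∀ n ≤ M, φ (n + 1) - φ n ≤ π)
    (hanti : ∀ n < M, φ (n + 2) - φ (n + 1) ≤ φ (n + 1) - φ n) :
    ‖∑ n ∈ range (M + 1), (Circle.exp (φ n) : ℂ) -
        Circle.exp (φ (M + 1)) * (Circle.exp (φ (M + 1) - φ M) - 1 : ℂ)⁻¹‖
      ≤ 4 / (φ (M + 1) - φ M) := by
  induction M with
  | zero =>
    have hsum : ∑ n ∈ range (0 + 1), (Circle.exp (φ n) : ℂ) -
        Circle.exp (φ (0 + 1)) * (Circle.exp (φ (0 + 1) - φ 0) - 1 : ℂ)⁻¹ =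
          -(Circle.exp (φ 0) * (Circle.exp (φ (0 + 1) - φ 0) - 1 : ℂ)⁻¹) := by
      rw [sum_range_one]
      linear_combination circleExp_eq_sub_mul_inv (hpos 0 le_rfl) (hle 0 le_rfl)
    rw [hsum, norm_neg, norm_mul, Circle.norm_coe, one_mul]
    refine (norm_inv_circleExp_sub_one_le (hpos 0 le_rfl) (hle 0 le_rfl)).trans ?_
    have := hpos 0 le_rfl
    gcongr
    norm_num
  | succ M ih =>
    set p := φ (M + 1) - φ M
    set q := φ (M + 1 + 1) - φ (M + 1)
    have hsum : ∑ n ∈ range (M + 1 + 1), (Circle.exp (φ n) : ℂ) -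
        Circle.exp (φ (M + 1 + 1)) * (Circle.exp q - 1 : ℂ)⁻¹ =
          (∑ n ∈ range (M + 1), (Circle.exp (φ n) : ℂ) -
            Circle.exp (φ (M + 1)) * (Circle.exp p - 1 : ℂ)⁻¹) +
          Circle.exp (φ (M + 1)) * ((Circle.exp p - 1 : ℂ)⁻¹ - (Circle.exp q - 1 : ℂ)⁻¹) := by
      rw [sum_range_succ]
      linear_combination circleExp_eq_sub_mul_inv (hpos (M + 1) le_rfl) (hle (M + 1) le_rfl)
    have hprev := ih (fun n hn => hpos n (by omega)) (fun n hn => hle n (by omega))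
      (fun n hn => hanti n (by omega))
    have hstep := norm_inv_circleExp_sub_one_sub_le (hpos (M + 1) le_rfl) (hanti M M.lt_succ_self)
      (hle M M.le_succ)
    rw [hsum]
    refine (norm_add_le _ _).trans ?_
    rw [norm_mul, Circle.norm_coe, one_mul]
    linarith

lemma norm_sum_circleExp_le {δ : ℝ} (hδ : 0 < δ) (L : ℕ)
    (hlower : ∀ n, n + 1 < L → δ ≤ φ (n + 1) - φ n)
    (hupper : ∀ n, n + 1 < L → φ (n + 1) - φ n ≤ π)
    (hanti : ∀ n, n + 2 < L → φ (n + 2) - φ (n + 1) ≤ φ (n + 1) - φ n) :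
    ‖∑ n ∈ range L, (Circle.exp (φ n) : ℂ)‖ ≤ 6 / δ + 1 := by
  obtain hL | ⟨M, rfl⟩ : L ≤ 1 ∨ ∃ M, L = M + 2 :=
    (le_or_gt L 1).imp_right fun h => ⟨L - 2, by omega⟩
  · calc ‖∑ n ∈ range L, (Circle.exp (φ n) : ℂ)‖ ≤ L := by
          simpa using norm_sum_le (range L) fun n => (Circle.exp (φ n) : ℂ)
      _ ≤ 1 := by exact_mod_cast hL
      _ ≤ 6 / δ + 1 := le_add_of_nonneg_left (by positivity)
  · have hδM : δ ≤ φ (M + 1) - φ M := hlower M (by omega)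
    have hmain := norm_sum_circleExp_sub_boundary_le M
      (fun n hn => hδ.trans_le (hlower n (by omega))) (fun n hn => hupper n (by omega))
      (fun n hn => hanti n (by omega))
    have hinv := norm_inv_circleExp_sub_one_le (hδ.trans_le hδM) (hupper M (by omega))
    have hboundary := norm_le_norm_sub_add (∑ n ∈ range (M + 1), (Circle.exp (φ n) : ℂ))
      (Circle.exp (φ (M + 1)) * (Circle.exp (φ (M + 1) - φ M) - 1 : ℂ)⁻¹)
    rw [norm_mul, Circle.norm_coe, one_mul] at hboundary
    rw [sum_range_succ]
    calc _ ≤ _ + ‖(Circle.exp (φ (M + 1)) : ℂ)‖ := norm_add_le _ _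
      _ ≤ 6 / (φ (M + 1) - φ M) + 1 := by
        rw [Circle.norm_coe]
        gcongr
        calc _ ≤ _ := hboundary
          _ ≤ 4 / (φ (M + 1) - φ M) + 2 / (φ (M + 1) - φ M) := add_le_add hmain hinv
          _ = _ := by ring
      _ ≤ 6 / δ + 1 := by gcongr

end KuzminLandau

/-! ### Phases with alternating differences -/

section AlternatingPhase

/-- The window `[a, b)` in `[0, N)` is short enough that a translate of it by at most `N / 2`
does not meet it again after wrapping around `ℤ/N`. -/
structure IsShortWindow (N a b : ℕ) : Prop where
  le : b ≤ N
  two_mul_length_le : 2 * (b - a) ≤ N + 1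

/-- Quantitative form of the condition that the difference of the phase `φ` is completely monotone
on `[a, b)`: the `(i + 1)`-st differences of `φ` have sign `(-1)^i` and size at least `δ / N^i`.
The steps of `φ` are at most `π`, as the Kuzmin–Landau inequality requires. -/
structure IsAlternatingPhase (N : ℕ) (δ : ℝ) (a b : ℕ) (φ : ℕ → ℝ) : Prop where
  pos : 0 < δ
  le_one : δ ≤ 1
  lower : ∀ i n, a ≤ n → n + i + 1 < b → δ / N ^ i ≤ (-1) ^ i * Δ_[1] ^[i + 1] φ n
  upper : ∀ n, a ≤ n → n + 1 < b → Δ_[1] φ n ≤ π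

/-- The exponential phase `e^{iφ(n)}` cut off to the window `[a, b)`. -/
noncomputable def windowPhase (a b : ℕ) (φ : ℕ → ℝ) : ℕ → ℂ :=
  fun n => if n ∈ Ico a b then (Circle.exp (φ n) : ℂ) else 0

variable {N a b : ℕ} {δ : ℝ} {φ : ℕ → ℝ}

lemma norm_windowPhase_le_one (a b : ℕ) (φ : ℕ → ℝ) (n : ℕ) : ‖windowPhase a b φ n‖ ≤ 1 := by
  rw [windowPhase]
  split_ifs
  · rw [Circle.norm_coe]
  · rw [norm_zero]
    exact zero_le_one

lemma conj_windowPhase (a b : ℕ) (φ : ℕ → ℝ) (n : ℕ) :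
    conj (windowPhase a b φ n) = windowPhase a b (-φ) n := by
  rw [windowPhase, windowPhase, apply_ite conj, map_zero, Pi.neg_apply, Circle.exp_neg,
    Circle.coe_inv_eq_conj]

lemma gowersPow_windowPhase_neg [NeZero N] (s a b : ℕ) (φ : ℕ → ℝ) :
    gowersPow s (truncation N (windowPhase a b (-φ))) =
      gowersPow s (truncation N (windowPhase a b φ)) := by
  rw [← gowersPow_conj s (truncation N (windowPhase a b φ))]
  congr 1
  funext x
  exact (conj_windowPhase a b φ x.val).symm

lemma IsShortWindow.shrink (hw : IsShortWindow N a b) (k : ℕ) : IsShortWindow N a (b - k) :=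
  ⟨(b.sub_le k).trans hw.le, by have := hw.two_mul_length_le; omega⟩

lemma fwdDiff_natCast_eq_sum (f : ℕ → ℝ) (k n : ℕ) :
    Δ_[k] f n = ∑ j ∈ range k, Δ_[1] f (n + j) :=
  (sum_range_sub (fun j => f (n + j)) k).symm

lemma fwdDiff_iter_fwdDiff (f : ℕ → ℝ) (i k n : ℕ) :
    Δ_[1] ^[i] (Δ_[k] f) n = ∑ j ∈ range k, Δ_[1] ^[i + 1] f (n + j) := by
  have hsum : Δ_[k] f = ∑ j ∈ range k, fun n => Δ_[1] f (n + j) := by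
    funext n
    rw [fwdDiff_natCast_eq_sum, Finset.sum_apply]
  rw [hsum, fwdDiff_iter_finsetSum, Finset.sum_apply]
  simp only [fwdDiff_iter_comp_add, Function.iterate_succ_apply]

namespace IsAlternatingPhase

lemma add_const (h : IsAlternatingPhase N δ a b φ) (c : ℝ) :
    IsAlternatingPhase N δ a b (φ + fun _ => c) := by
  have hdiff : Δ_[1] (φ + fun _ => c) = Δ_[1] φ := by
    rw [fwdDiff_add, fwdDiff_const]
    exact add_zero _
  refine ⟨h.pos, h.le_one, fun i n => ?_, fun n => ?_⟩
  · rw [Function.iterate_succ_apply, hdiff, ← Function.iterate_succ_apply]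
    exact h.lower i n
  · rw [hdiff]
    exact h.upper n

lemma neg_fwdDiff [NeZero N] (h : IsAlternatingPhase N δ a b φ) {k : ℕ} (hk : 0 < k) (hkN : k ≤ N) :
    IsAlternatingPhase N (δ * (k / N)) a (b - k) (-Δ_[k] φ) := by
  have hN : (0 : ℝ) < N := Nat.cast_pos.2 (NeZero.pos N)
  have hiter (i n : ℕ) : (-1 : ℝ) ^ i * Δ_[1] ^[i + 1] (-Δ_[k] φ) n =
      ∑ j ∈ range k, (-1) ^ (i + 1) * Δ_[1] ^[i + 1 + 1] φ (n + j) := by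
    rw [← neg_one_smul ℝ (Δ_[k] φ), fwdDiff_iter_const_smul, Pi.smul_apply, fwdDiff_iter_fwdDiff,
      smul_eq_mul, ← mul_assoc, ← pow_succ, mul_sum]
  refine ⟨mul_pos h.pos (by positivity), ?_, fun i n han hnb => ?_, fun n han hnb => ?_⟩
  · exact mul_le_one₀ h.le_one (by positivity) ((div_le_one hN).2 (Nat.cast_le.2 hkN))
  · have hterm : ∀ j ∈ range k, δ / N ^ (i + 1) ≤ (-1) ^ (i + 1) * Δ_[1] ^[i + 1 + 1] φ (n + j) :=
      fun j hj => h.lower (i + 1) (n + j) (by omega) (by have := mem_range.1 hj; omega)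
    rw [hiter]
    refine le_trans (le_of_eq ?_) (card_nsmul_le_sum _ _ _ hterm)
    rw [card_range, nsmul_eq_mul, pow_succ]
    field_simp
  · have hstep : Δ_[1] (-Δ_[k] φ) n = Δ_[1] φ n - Δ_[1] φ (n + k) := by
      simp only [fwdDiff, Pi.neg_apply, add_right_comm n 1 k]
      ring
    have hlower : δ ≤ Δ_[1] φ (n + k) := by
      simpa using h.lower 0 (n + k) (by omega) (by omega)
    rw [hstep]
    linarith [h.upper n han (by omega), h.pos]

lemma norm_sum_windowPhase_le (h : IsAlternatingPhase N δ a b φ) (hb : b ≤ N) :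
    ‖∑ n ∈ range N, windowPhase a b φ n‖ ≤ 6 / δ + 1 := by
  have hsum : ∑ n ∈ range N, windowPhase a b φ n =
      ∑ j ∈ range (b - a), (Circle.exp (φ (a + j)) : ℂ) := by
    have hsub : Ico a b ⊆ range N := fun n hn => mem_range.2 ((mem_Ico.1 hn).2.trans_le hb)
    simp only [windowPhase]
    rw [sum_ite_mem, inter_eq_right.2 hsub, sum_Ico_eq_sum_range]
  rw [hsum]
  refine norm_sum_circleExp_le h.pos _ (fun n hn => ?_) (fun n hn => ?_) fun n hn => ?_
  · simpa [fwdDiff, add_assoc] using h.lower 0 (a + n) (by omega) (by omega)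
  · exact h.upper (a + n) (by omega) (by omega)
  · have hconcave : 0 ≤ (-1) ^ 1 * Δ_[1] ^[1 + 1] φ (a + n) :=
      le_trans (div_nonneg h.pos.le (by positivity)) (h.lower 1 (a + n) (by omega) (by omega))
    simp only [Function.iterate_succ_apply, Function.iterate_zero_apply, fwdDiff, add_assoc,
      Nat.reduceAdd] at hconcave
    linarith

lemma gowersPow_zero_le [NeZero N] (h : IsAlternatingPhase N δ a b φ) (hb : b ≤ N) :
    gowersPow 0 (truncation N (windowPhase a b φ)) ≤ (7 / (N * δ)) ^ 2 := by
  have hN : (0 : ℝ) < N := Nat.cast_pos.2 (NeZero.pos N)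
  have hδ := h.pos
  have hmean : 𝔼 x, truncation N (windowPhase a b φ) x =
      (∑ n ∈ range N, windowPhase a b φ n) / N := by
    rw [Fintype.expect_eq_sum_div_card, ZMod.card, ← sum_zmod_val]
    rfl
  rw [gowersPow_zero, hmean, norm_div, Complex.norm_natCast]
  rw [mul_comm, ← div_div 7]
  gcongr
  calc _ ≤ 6 / δ + 1 := h.norm_sum_windowPhase_le hb
    _ ≤ 6 / δ + 1 / δ := by gcongr; exact (one_le_div hδ).2 h.le_one
    _ = 7 / δ := by ring

end IsAlternatingPhase

/- The window condition makes the cyclic and the integer derivative agree. -/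
lemma mulDeriv_windowPhase [NeZero N] (hw : IsShortWindow N a b) {k : ℕ} (hk : k ≤ N / 2)
    (φ : ℕ → ℝ) : mulDeriv (k : ZMod N) (truncation N (windowPhase a b φ)) =
      truncation N (windowPhase a (b - k) (Δ_[k] φ)) := by
  funext x
  have hx := x.val_lt
  have hwle := hw.le
  have hlen := hw.two_mul_length_le
  have hval : (x + k).val = if x.val + k < N then x.val + k else x.val + k - N := by
    have hmod : k % N = k := Nat.mod_eq_of_lt (by omega)
    rw [ZMod.val_add, ZMod.val_natCast, hmod]
    split_ifs with hlt
    · exact Nat.mod_eq_of_lt hlt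
    · rw [Nat.mod_eq_sub_mod (by omega), Nat.mod_eq_of_lt (by omega)]
  have hmem : x.val ∈ Ico a (b - k) ↔ (x + k).val ∈ Ico a b ∧ x.val ∈ Ico a b := by
    rw [hval]
    split_ifs <;> simp only [mem_Ico] <;> omega
  simp only [mulDeriv, truncation, conj_windowPhase]
  by_cases hin : x.val ∈ Ico a (b - k)
  · obtain ⟨hshift, hbase⟩ := hmem.1 hin
    have hshift_eq : (x + k).val = x.val + k := by
      rw [hval, if_pos (by have := (mem_Ico.1 hin).2; omega)]
    simp only [windowPhase, if_pos hin, if_pos hshift, if_pos hbase]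
    rw [← Circle.coe_mul, ← Circle.exp_add, hshift_eq, Pi.neg_apply, ← sub_eq_add_neg]
    rfl
  · simp only [windowPhase, if_neg hin]
    rcases not_and_or.1 (mt hmem.2 hin) with hout | hout
    · rw [if_neg hout, zero_mul]
    · rw [if_neg hout, mul_zero]

lemma gowersPow_mulDeriv_natAbs [NeZero N] (s : ℕ) (h : ZMod N) (f : ZMod N → ℂ) :
    gowersPow s (mulDeriv (h.valMinAbs.natAbs : ZMod N) f) = gowersPow s (mulDeriv h f) := by
  rw [ZMod.natCast_natAbs_valMinAbs]
  split_ifs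
  · rfl
  · exact gowersPow_mulDeriv_neg s h f

lemma card_natAbs_valMinAbs_lt_le (N K : ℕ) [NeZero N] :
    #{h : ZMod N | h.valMinAbs.natAbs < K} ≤ 2 * K := by
  calc #{h : ZMod N | h.valMinAbs.natAbs < K} ≤ #(Ioo (-K : ℤ) K) :=
        card_le_card_of_injOn ZMod.valMinAbs (fun h hh => by
          have := (mem_filter.1 hh).2
          simp only [coe_Ioo, Set.mem_Ioo]
          omega) ZMod.injective_valMinAbs.injOn
    _ ≤ 2 * K := by
      rw [Int.card_Ioo]
      omega

lemma gowersPow_mulDeriv_windowPhase_add_linear [NeZero N] (hw : IsShortWindow N a b) {k : ℕ}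
    (hk : k ≤ N / 2) (s : ℕ) (φ : ℕ → ℝ) (t : ℝ) :
    gowersPow s (mulDeriv (k : ZMod N) (truncation N (windowPhase a b (φ + fun n : ℕ => t * n)))) =
      gowersPow s (truncation N (windowPhase a (b - k) (-Δ_[k] φ + fun _ => -(t * k)))) := by
  rw [mulDeriv_windowPhase hw hk, ← gowersPow_windowPhase_neg]
  congr 3
  funext n
  simp only [fwdDiff, Pi.neg_apply, Pi.add_apply, Nat.cast_add]
  ring

lemma gowersPow_mulDeriv_windowPhase_le_one [NeZero N] (s : ℕ) (a b : ℕ) (φ : ℕ → ℝ) (h : ZMod N) :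
    gowersPow s (mulDeriv h (truncation N (windowPhase a b φ))) ≤ 1 := by
  have hbound (x : ZMod N) : ‖mulDeriv h (truncation N (windowPhase a b φ)) x‖ ≤ 1 := by
    rw [norm_mulDeriv]
    exact mul_le_one₀ (norm_windowPhase_le_one ..) (norm_nonneg _) (norm_windowPhase_le_one ..)
  refine (gowersPow_le_expect_norm s hbound).trans ?_
  rw [one_pow, one_mul]
  exact expect_le univ_nonempty fun x _ => hbound x

lemma expect_zmod_le_of_le_half_of_large [NeZero N] {F : ZMod N → ℝ} {ε : ℝ} (hεN : 8 ≤ ε * N)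
    (hF : ∀ x, F x ≤ 1) (hlarge : ∀ x, ε / 8 * N ≤ x.valMinAbs.natAbs → F x ≤ ε / 2) :
    𝔼 x, F x ≤ ε := by
  have hN : (0 : ℝ) < N := Nat.cast_pos.2 (NeZero.pos N)
  have hε : 0 < ε := pos_of_mul_pos_left (by linarith) hN.le
  set K := ⌈ε / 8 * N⌉₊
  have hpoint (x : ZMod N) : F x ≤ ε / 2 + if x.valMinAbs.natAbs < K then 1 else 0 := by
    split_ifs with hx
    · linarith [hF x]
    · linarith [hlarge x (Nat.ceil_le.1 (not_lt.1 hx))]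
  have hcard : (#{x : ZMod N | x.valMinAbs.natAbs < K} : ℝ) ≤ ε / 2 * N := by
    calc (#{x : ZMod N | x.valMinAbs.natAbs < K} : ℝ) ≤ 2 * K := by
          exact_mod_cast card_natAbs_valMinAbs_lt_le N K
      _ ≤ ε / 2 * N := by
          linarith [Nat.ceil_lt_add_one (a := ε / 8 * N) (by positivity)]
  calc 𝔼 x, F x ≤ 𝔼 x : ZMod N, (ε / 2 + if x.valMinAbs.natAbs < K then 1 else 0) :=
        expect_le_expect fun x _ => hpoint x
    _ = ε / 2 + #{x : ZMod N | x.valMinAbs.natAbs < K} / N := by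
        rw [expect_add_distrib, Fintype.expect_const, Fintype.expect_eq_sum_div_card, ZMod.card,
          sum_boole]
    _ ≤ ε / 2 + ε / 2 := add_le_add_right ((div_le_iff₀ hN).2 hcard) _
    _ = ε := add_halves ε

lemma IsAlternatingPhase.gowersPow_succ_add_linear_le [NeZero N]
    (h : IsAlternatingPhase N δ a b φ) (hw : IsShortWindow N a b) (t : ℝ) {s : ℕ} {ε M : ℝ}
    (hε : 0 < ε) (hM : 1 ≤ M) (hNδ : 8 / ε * M ≤ N * δ)
    (hs : ∀ {δ' : ℝ} {b' : ℕ} {ψ : ℕ → ℝ}, IsAlternatingPhase N δ' a b' ψ →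
      IsShortWindow N a b' → M ≤ N * δ' → gowersPow s (truncation N (windowPhase a b' ψ)) ≤ ε / 2) :
    gowersPow (s + 1) (truncation N (windowPhase a b (φ + fun n : ℕ => t * n))) ≤ ε := by
  have hN : (0 : ℝ) < N := Nat.cast_pos.2 (NeZero.pos N)
  have hεN : 8 ≤ ε * N := by
    calc (8 : ℝ) = ε * (8 / ε * 1) := by field_simp
      _ ≤ ε * (8 / ε * M) := by gcongr
      _ ≤ ε * (N * δ) := by gcongr
      _ ≤ ε * (N * 1) := by gcongr; exact h.le_one
      _ = ε * N := by rw [mul_one]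
  refine expect_zmod_le_of_le_half_of_large hεN
    (gowersPow_mulDeriv_windowPhase_le_one s a b _) fun x hx => ?_
  set k := x.valMinAbs.natAbs
  have hk : k ≤ N / 2 := ZMod.natAbs_valMinAbs_le x
  have hk₀ : 0 < k := Nat.cast_pos.1 (lt_of_lt_of_le (by positivity) hx)
  rw [← gowersPow_mulDeriv_natAbs, gowersPow_mulDeriv_windowPhase_add_linear hw hk]
  refine hs ((h.neg_fwdDiff hk₀ (by omega)).add_const _) (hw.shrink k) ?_
  calc M = ε / 8 * (8 / ε * M) := by field_simp
    _ ≤ ε / 8 * (N * δ) := by gcongr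
    _ = ε / 8 * N * δ := by ring
    _ ≤ k * δ := mul_le_mul_of_nonneg_right hx h.pos.le
    _ = N * (δ * (k / N)) := by field_simp

theorem exists_forall_gowersPow_windowPhase_le (s : ℕ) {ε : ℝ} (hε : 0 < ε) :
    ∃ M : ℝ, ∀ {N : ℕ} [NeZero N] {a b : ℕ} {δ : ℝ} {φ : ℕ → ℝ}, IsAlternatingPhase N δ a b φ →
      IsShortWindow N a b → M ≤ N * δ → gowersPow s (truncation N (windowPhase a b φ)) ≤ ε := by
  induction s generalizing ε with
  | zero =>
    refine ⟨7 / √ε, fun {N _ a b δ φ} h hw hM => (h.gowersPow_zero_le hw.le).trans ?_⟩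
    have hδ := h.pos
    calc (7 / (N * δ)) ^ 2 ≤ (7 / (7 / √ε)) ^ 2 := by gcongr
      _ = ε := by rw [div_div_cancel₀ (by norm_num), Real.sq_sqrt hε.le]
  | succ s ih =>
    obtain ⟨M, hM⟩ := ih (half_pos hε)
    refine ⟨8 / ε * max M 1, fun {N _ a b δ φ} h hw hNδ => ?_⟩
    have hlin := h.gowersPow_succ_add_linear_le hw 0 hε (le_max_right M 1) hNδ
      fun h' hw' hM' => hM h' hw' ((le_max_left M 1).trans hM')
    simpa only [zero_mul, ← Pi.zero_def, add_zero] using hlin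

theorem exists_forall_gowersPow_windowPhase_add_linear_le (s : ℕ) {ε : ℝ} (hε : 0 < ε) :
    ∃ M : ℝ, ∀ {N : ℕ} [NeZero N] {a b : ℕ} {δ : ℝ} {φ : ℕ → ℝ}, IsAlternatingPhase N δ a b φ →
      IsShortWindow N a b → M ≤ N * δ → ∀ t : ℝ,
      gowersPow (s + 1) (truncation N (windowPhase a b (φ + fun n : ℕ => t * n))) ≤ ε := by
  obtain ⟨M, hM⟩ := exists_forall_gowersPow_windowPhase_le s (half_pos hε)
  exact ⟨8 / ε * max M 1, fun h hw hNδ t =>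
    h.gowersPow_succ_add_linear_le hw t hε (le_max_right M 1) hNδ
      fun h' hw' hM' => hM h' hw' ((le_max_left M 1).trans hM')⟩

end AlternatingPhase

/-! ### The square-root phase -/

section PowerDifferences

variable {f f' : ℝ → ℝ} {c x : ℝ}

lemma hasDerivAt_fwdDiff_iter (hf : ∀ x, c < x → HasDerivAt f (f' x) x) (i : ℕ) (hx : c < x) :
    HasDerivAt (Δ_[1] ^[i] f) (Δ_[1] ^[i] f' x) x := by
  induction i generalizing x with
  | zero => exact hf x hx
  | succ i ih =>
    simp only [Function.iterate_succ_apply']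
    exact ((ih (hx.trans (lt_add_one x))).comp_add_const x 1).sub (ih hx)

lemma exists_fwdDiff_iter_succ_eq (hf : ∀ x, c < x → HasDerivAt f (f' x) x) (i : ℕ) (hx : c < x) :
    ∃ y ∈ Set.Ioo x (x + 1), Δ_[1] ^[i + 1] f x = Δ_[1] ^[i] f' y := by
  have hderiv : ∀ y, x ≤ y → HasDerivAt (Δ_[1] ^[i] f) (Δ_[1] ^[i] f' y) y :=
    fun y hy => hasDerivAt_fwdDiff_iter hf i (hx.trans_le hy)
  obtain ⟨y, hy, hslope⟩ := exists_hasDerivAt_eq_slope _ _ (lt_add_one x)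
    (fun y hy => (hderiv y hy.1).continuousAt.continuousWithinAt) fun y hy => hderiv y hy.1.le
  refine ⟨y, hy, ?_⟩
  rw [hslope, add_sub_cancel_left, div_one, Function.iterate_succ_apply']
  rfl

lemma exists_fwdDiff_iter_succ_rpow_eq (p : ℝ) (i : ℕ) (hx : 0 < x) :
    ∃ y ∈ Set.Ioo x (x + 1),
      Δ_[1] ^[i + 1] (· ^ p : ℝ → ℝ) x = p * Δ_[1] ^[i] (· ^ (p - 1) : ℝ → ℝ) y := by
  obtain ⟨y, hy, hdiff⟩ := exists_fwdDiff_iter_succ_eq (f' := p • (· ^ (p - 1) : ℝ → ℝ))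
    (fun z hz => Real.hasDerivAt_rpow_const (Or.inl hz.ne')) i hx
  refine ⟨y, hy, hdiff.trans ?_⟩
  rw [fwdDiff_iter_const_smul]
  rfl

lemma min_mul_rpow_le_fwdDiff_iter_rpow {p : ℝ} (hp : p < 0) (i : ℕ) (hx : 0 < x) :
    min 1 (-p) * (x + i) ^ (p - i) ≤ (-1) ^ i * Δ_[1] ^[i] (· ^ p : ℝ → ℝ) x := by
  induction i generalizing p x with
  | zero => simpa using mul_le_of_le_one_left (Real.rpow_nonneg hx.le p) (min_le_left 1 (-p))
  | succ i ih =>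
    obtain ⟨y, ⟨hxy, hyx⟩, hdiff⟩ := exists_fwdDiff_iter_succ_rpow_eq p i hx
    have hy : 0 < y := hx.trans hxy
    have hp' : p - 1 < 0 := by linarith
    calc min 1 (-p) * (x + (i + 1 : ℕ)) ^ (p - (i + 1 : ℕ))
        ≤ -p * (x + (i + 1 : ℕ)) ^ (p - (i + 1 : ℕ)) := by gcongr; exact min_le_right 1 (-p)
      _ ≤ -p * (y + i) ^ (p - 1 - i) := by
          push_cast
          rw [sub_sub p 1, add_comm (1 : ℝ)]
          refine mul_le_mul_of_nonneg_left ?_ (neg_pos.2 hp).le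
          exact Real.rpow_le_rpow_of_nonpos (by positivity) (by linarith) (by linarith)
      _ = -p * (min 1 (-(p - 1)) * (y + i) ^ (p - 1 - i)) := by
          rw [min_eq_left (by linarith), one_mul]
      _ ≤ -p * ((-1) ^ i * Δ_[1] ^[i] (· ^ (p - 1) : ℝ → ℝ) y) :=
          mul_le_mul_of_nonneg_left (ih hp' hy) (neg_pos.2 hp).le
      _ = (-1) ^ (i + 1) * Δ_[1] ^[i + 1] (· ^ p : ℝ → ℝ) x := by rw [hdiff]; ring

lemma rpow_div_four_le_fwdDiff_iter_sqrt (i : ℕ) (hx : 0 < x) :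
    (x + 1 + i) ^ (-(1 / 2) - i : ℝ) / 4 ≤ (-1) ^ i * Δ_[1] ^[i + 1] Real.sqrt x := by
  obtain ⟨y, ⟨hxy, hyx⟩, hdiff⟩ := exists_fwdDiff_iter_succ_rpow_eq (1 / 2) i hx
  have hy : 0 < y := hx.trans hxy
  have hsqrt : Real.sqrt = (· ^ (1 / 2 : ℝ)) := funext Real.sqrt_eq_rpow
  calc (x + 1 + i) ^ (-(1 / 2) - i : ℝ) / 4 ≤ (y + i) ^ (-(1 / 2) - i : ℝ) / 4 := by
        gcongr ?_ / 4
        exact Real.rpow_le_rpow_of_nonpos (by positivity) (by linarith) (by linarith)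
    _ = 1 / 2 * (min 1 (-(-(1 / 2) : ℝ)) * (y + i) ^ (-(1 / 2) - i : ℝ)) := by
        rw [neg_neg, min_eq_right (by norm_num)]
        ring
    _ ≤ 1 / 2 * ((-1) ^ i * Δ_[1] ^[i] (· ^ (-(1 / 2) : ℝ) : ℝ → ℝ) y) := by
        have hpow := min_mul_rpow_le_fwdDiff_iter_rpow (p := -(1 / 2)) (by norm_num) i hy
        gcongr
    _ = (-1) ^ i * Δ_[1] ^[i + 1] Real.sqrt x := by
        rw [hsqrt, hdiff, mul_left_comm]
        norm_num

end PowerDifferences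

lemma fwdDiff_iter_comp_natCast_add_one (f : ℝ → ℝ) (i n : ℕ) :
    Δ_[1] ^[i] (fun n : ℕ => f (n + 1)) n = Δ_[1] ^[i] f (n + 1) := by
  induction i generalizing n with
  | zero => rfl
  | succ i ih =>
    simp only [Function.iterate_succ_apply', fwdDiff, ih, Nat.cast_add_one]

lemma rpow_neg_half_sub_natCast {x : ℝ} (hx : 0 < x) (i : ℕ) :
    x ^ (-(1 / 2) - i : ℝ) = 1 / √x / x ^ i := by
  rw [Real.rpow_sub hx, Real.rpow_neg hx.le, ← Real.sqrt_eq_rpow, Real.rpow_natCast, one_div]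

lemma sqrt_add_one_sub_sqrt_mul_sqrt_le_one {x : ℝ} (hx : 0 ≤ x) : (√(x + 1) - √x) * √x ≤ 1 := by
  have hsq : √(x + 1) ^ 2 = x + 1 := Real.sq_sqrt (by positivity)
  linarith [Real.sq_sqrt hx, two_mul_le_add_sq √(x + 1) √x]

lemma fwdDiff_mul_sqrt_le_one {C : ℝ} {n : ℕ} (hC : C ≤ √(n + 1)) :
    Δ_[1] (fun n : ℕ => C * √(n + 1)) n ≤ 1 := by
  calc Δ_[1] (fun n : ℕ => C * √(n + 1)) n = (√(n + 1 + 1 : ℝ) - √(n + 1)) * C := by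
        simp only [fwdDiff, Nat.cast_add_one]
        ring
    _ ≤ (√(n + 1 + 1 : ℝ) - √(n + 1)) * √(n + 1) :=
        mul_le_mul_of_nonneg_left hC (sub_nonneg.2 (Real.sqrt_le_sqrt (lt_add_one _).le))
    _ ≤ 1 := sqrt_add_one_sub_sqrt_mul_sqrt_le_one (by positivity)

lemma isAlternatingPhase_mul_sqrt {N a b : ℕ} [NeZero N] {C : ℝ} (hC : 1 ≤ C) (ha : C ^ 2 ≤ a)
    (hb : b ≤ N) : IsAlternatingPhase N (1 / √N / 4) a b fun n : ℕ => C * √(n + 1) := by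
  have hN : (1 : ℝ) ≤ N := Nat.one_le_cast.2 (NeZero.pos N)
  refine ⟨by positivity, ?_, fun i n _ hnb => ?_, fun n han _ => ?_⟩
  · have : 1 / √N ≤ 1 := div_le_self zero_le_one (Real.one_le_sqrt.2 hN)
    linarith
  · have hnN : (n : ℝ) + 1 + 1 + i ≤ N := by exact_mod_cast (by omega : n + 1 + 1 + i ≤ N)
    calc 1 / √N / 4 / N ^ i = (N : ℝ) ^ (-(1 / 2) - i : ℝ) / 4 := by
          rw [rpow_neg_half_sub_natCast (by linarith), div_right_comm]
      _ ≤ ((n : ℝ) + 1 + 1 + i) ^ (-(1 / 2) - i : ℝ) / 4 := by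
          gcongr ?_ / 4
          exact Real.rpow_le_rpow_of_nonpos (by positivity) hnN (by linarith)
      _ ≤ (-1) ^ i * Δ_[1] ^[i + 1] Real.sqrt (n + 1) :=
          rpow_div_four_le_fwdDiff_iter_sqrt i (by positivity)
      _ ≤ C * ((-1) ^ i * Δ_[1] ^[i + 1] Real.sqrt (n + 1)) :=
          le_mul_of_one_le_left (le_trans (by positivity)
            (rpow_div_four_le_fwdDiff_iter_sqrt i (by positivity))) hC
      _ = (-1) ^ i * Δ_[1] ^[i + 1] (fun n : ℕ => C * √(n + 1)) n := by
          rw [← fwdDiff_iter_comp_natCast_add_one, mul_left_comm, ← smul_eq_mul C,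
            ← Pi.smul_apply, ← fwdDiff_iter_const_smul]
          rfl
  · have hCn : C ^ 2 ≤ n + 1 := ha.trans (by exact_mod_cast han.trans n.le_succ)
    exact (fwdDiff_mul_sqrt_le_one (Real.le_sqrt_of_sq_le hCn)).trans
      (by linarith [Real.pi_gt_three])

/-! ### Waves -/

/-- Windows `[a N, b N)` of `ℤ/(N + 1)` on which, for every frequency `m`, the phase `π m √n` is
eventually slow enough for the Kuzmin–Landau inequality. -/
structure IsDriftingWindow (a b : ℕ → ℕ) : Prop where
  isShortWindow : ∀ N, IsShortWindow (N + 1) (a N) (b N)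
  tendsto_left : Tendsto a atTop atTop

lemma IsDriftingWindow.gowersNull_mul_sqrt_add_linear_of_one_le {a b : ℕ → ℕ}
    (h : IsDriftingWindow a b) (s : ℕ) {C : ℝ} (hC : 1 ≤ C) (t : ℝ) :
    GowersNull atTop (s + 1) fun N => truncation (N + 1)
      (windowPhase (a N) (b N) ((fun n : ℕ => C * √(n + 1)) + fun n : ℕ => t * n)) := by
  refine .of_eventually_le fun ε hε => ?_
  obtain ⟨M, hM⟩ := exists_forall_gowersPow_windowPhase_add_linear_le s hε
  have hleft : ∀ᶠ N in atTop, C ^ 2 ≤ a N :=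
    (tendsto_natCast_atTop_atTop.comp h.tendsto_left).eventually_ge_atTop (C ^ 2)
  have hsize : ∀ᶠ N : ℕ in atTop, 4 * M ≤ √((N + 1 : ℕ) : ℝ) :=
    (Real.tendsto_sqrt_atTop.comp (tendsto_natCast_atTop_atTop.comp
      (tendsto_add_atTop_nat 1))).eventually_ge_atTop (4 * M)
  filter_upwards [hleft, hsize] with N hleft hsize
  refine hM (isAlternatingPhase_mul_sqrt hC hleft (h.isShortWindow N).le) (h.isShortWindow N) ?_ t
  rw [mul_div_assoc', mul_one_div, Real.div_sqrt]
  linarith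

lemma IsDriftingWindow.gowersNull_mul_sqrt_add_linear {a b : ℕ → ℕ} (h : IsDriftingWindow a b)
    (s : ℕ) {C : ℝ} (hC : 1 ≤ |C|) (t : ℝ) :
    GowersNull atTop (s + 1) fun N => truncation (N + 1)
      (windowPhase (a N) (b N) ((fun n : ℕ => C * √(n + 1)) + fun n : ℕ => t * n)) := by
  rcases le_abs.1 hC with hpos | hneg
  · exact h.gowersNull_mul_sqrt_add_linear_of_one_le s hpos t
  · refine (h.gowersNull_mul_sqrt_add_linear_of_one_le s hneg (-t)).congr fun N => ?_
    rw [← gowersPow_windowPhase_neg]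
    congr 3
    funext n
    simp only [Pi.neg_apply, Pi.add_apply]
    ring

section Wave

local instance fact_two_pos : Fact ((0 : ℝ) < 2) := ⟨two_pos⟩

/-- The sequence `(-1)^n (g(√(n + 1)) - g(√(n + 1) + 1))` cut off to the window `[a, b)`. Making
`g` antisymmetric under the half-period removes its mean, whose contribution `(-1)^n` would not be
Gowers-null. -/
noncomputable def wave (a b : ℕ) : C(AddCircle (2 : ℝ), ℂ) →ₗ[ℂ] ℕ → ℂ where
  toFun g n := if n ∈ Ico a b then
    (-1) ^ n * (g (√(n + 1) : ℝ) - g (√(n + 1) + 1 : ℝ)) else 0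
  map_add' g g' := by
    funext n
    simp only [ContinuousMap.add_apply, Pi.add_apply]
    split_ifs <;> ring
  map_smul' c g := by
    funext n
    simp only [ContinuousMap.smul_apply, Pi.smul_apply, smul_eq_mul, RingHom.id_apply]
    split_ifs <;> ring

lemma wave_apply (a b : ℕ) (g : C(AddCircle (2 : ℝ), ℂ)) (n : ℕ) : wave a b g n =
    if n ∈ Ico a b then (-1) ^ n * (g (√(n + 1) : ℝ) - g (√(n + 1) + 1 : ℝ)) else 0 :=
  rfl

lemma norm_wave_le (a b : ℕ) (g : C(AddCircle (2 : ℝ), ℂ)) (n : ℕ) :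
    ‖wave a b g n‖ ≤ 2 * ‖g‖ := by
  rw [wave_apply]
  split_ifs
  · rw [norm_mul, norm_pow, norm_neg, norm_one, one_pow, one_mul, two_mul]
    exact norm_sub_le_of_le (g.norm_coe_le_norm _) (g.norm_coe_le_norm _)
  · rw [norm_zero]
    positivity

lemma circleExp_pi_mul_natCast (n : ℕ) : (Circle.exp (π * n) : ℂ) = (-1) ^ n := by
  rw [mul_comm, Circle.exp_natCast_mul, Circle.coe_pow, Circle.coe_exp, Complex.exp_pi_mul_I]

lemma fourier_two_apply (m : ℤ) (x : ℝ) :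
    fourier m (x : AddCircle (2 : ℝ)) = Circle.exp (π * m * x) := by
  rw [fourier_coe_apply, Circle.coe_exp]
  congr 1
  push_cast
  ring

lemma wave_fourier (a b : ℕ) (m : ℤ) : wave a b (fourier m) =
    (1 - Circle.exp (π * m) : ℂ) •
      windowPhase a b ((fun n : ℕ => π * m * √(n + 1)) + fun n : ℕ => π * n) := by
  funext n
  simp only [wave_apply, windowPhase, Pi.smul_apply, Pi.add_apply, smul_eq_mul, mul_ite, mul_zero]
  refine if_congr Iff.rfl ?_ rfl
  rw [fourier_two_apply, fourier_two_apply, mul_add, mul_one, Circle.exp_add, Circle.exp_add,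
    Circle.coe_mul, Circle.coe_mul, circleExp_pi_mul_natCast]
  ring

variable {a b : ℕ → ℕ}

lemma IsDriftingWindow.gowersNull_wave_fourier (h : IsDriftingWindow a b) (s : ℕ) (m : ℤ) :
    GowersNull atTop (s + 1) fun N => truncation (N + 1) (wave (a N) (b N) (fourier m)) := by
  rcases eq_or_ne m 0 with rfl | hm
  · simp only [wave_fourier, Int.cast_zero, mul_zero, Circle.exp_zero, Circle.coe_one, sub_self,
      zero_smul]
    exact .zero
  · have hC : 1 ≤ |π * m| := by
      rw [abs_mul, abs_of_pos Real.pi_pos]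
      have : (1 : ℝ) ≤ |(m : ℝ)| := by exact_mod_cast Int.one_le_abs hm
      nlinarith [Real.pi_gt_three]
    simp only [wave_fourier]
    exact (h.gowersNull_mul_sqrt_add_linear s hC π).const_smul _

lemma IsDriftingWindow.gowersNull_wave_of_mem_span (h : IsDriftingWindow a b) (s : ℕ)
    {p : C(AddCircle (2 : ℝ), ℂ)} (hp : p ∈ Submodule.span ℂ (Set.range (@fourier 2))) :
    GowersNull atTop (s + 1) fun N => truncation (N + 1) (wave (a N) (b N) p) := by
  induction hp using Submodule.span_induction with
  | mem p hp =>
    obtain ⟨m, rfl⟩ := hp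
    exact h.gowersNull_wave_fourier s m
  | zero =>
    simp only [map_zero]
    exact .zero
  | add p q _ _ hp hq =>
    simp only [map_add]
    exact hp.add hq
  | smul c p _ hp =>
    simp only [map_smul]
    exact hp.const_smul c

theorem IsDriftingWindow.gowersNull_wave (h : IsDriftingWindow a b) (s : ℕ)
    (g : C(AddCircle (2 : ℝ), ℂ)) :
    GowersNull atTop (s + 1) fun N => truncation (N + 1) (wave (a N) (b N) g) := by
  refine .of_approx (B := 1) fun η hη => ?_
  have hg : g ∈ closure (Submodule.span ℂ (Set.range (@fourier 2)) : Set _) := by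
    rw [← Submodule.topologicalClosure_coe, span_fourier_closure_eq_top]
    trivial
  obtain ⟨p, hp, hgp⟩ := Metric.mem_closure_iff.1 hg (min 1 η / 2) (by positivity)
  have hclose (N n : ℕ) : ‖wave (a N) (b N) g n - wave (a N) (b N) p n‖ ≤ min 1 η := by
    rw [← Pi.sub_apply, ← map_sub]
    refine (norm_wave_le _ _ _ n).trans ?_
    rw [← dist_eq_norm]
    linarith
  exact ⟨_, h.gowersNull_wave_of_mem_span s hp, .of_forall fun N =>
    ⟨fun x => (hclose N x.val).trans (min_le_left 1 η),
      expect_le univ_nonempty fun x _ => (hclose N x.val).trans (min_le_right 1 η)⟩⟩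

lemma wave_add_wave_max {b c : ℕ} (a : ℕ) (hbc : b ≤ c) (g : C(AddCircle (2 : ℝ), ℂ)) :
    wave a b g + wave (max a b) c g = wave a c g := by
  funext n
  simp only [Pi.add_apply, wave_apply, mem_Ico, max_le_iff]
  grind

theorem gowersNull_wave_of_tendsto (ha : Tendsto a atTop atTop) (s : ℕ)
    (g : C(AddCircle (2 : ℝ), ℂ)) :
    GowersNull atTop (s + 1) fun N => truncation (N + 1) (wave (a N) (N + 1) g) := by
  have hfirst : IsDriftingWindow a fun N => (N + 1) / 2 :=
    ⟨fun N => ⟨by omega, by omega⟩, ha⟩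
  have hsecond : IsDriftingWindow (fun N => max (a N) ((N + 1) / 2)) fun N => N + 1 :=
    ⟨fun N => ⟨le_rfl, by omega⟩, tendsto_atTop_mono (fun N => le_max_left _ _) ha⟩
  simp only [← wave_add_wave_max (a _) (Nat.div_le_self (_ + 1) 2)]
  exact (hfirst.gowersNull_wave s g).add (hsecond.gowersNull_wave s g)

/-- The continuous approximation `max (-1) (min 1 (M sin (π x)))` of the square wave of
period `2`. -/
noncomputable def clampSin (M : ℝ) : C(AddCircle (2 : ℝ), ℂ) where
  toFun x := (max (-1) (min 1 (M * (fourier 1 x).im)) : ℝ)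
  continuous_toFun := by fun_prop

lemma norm_clampSin_le_one (M : ℝ) : ‖clampSin M‖ ≤ 1 := by
  refine (ContinuousMap.norm_le _ zero_le_one).2 fun x => ?_
  rw [clampSin, ContinuousMap.coe_mk, Complex.norm_real, Real.norm_eq_abs, abs_le]
  exact ⟨le_max_left _ _, max_le (by norm_num) (min_le_left _ _)⟩

lemma le_sin_pi_mul {δ x : ℝ} (hδ : 0 ≤ δ) (hleft : δ ≤ x) (hright : x ≤ 1 - δ) :
    δ ≤ Real.sin (π * x) := by
  have hhalf {y : ℝ} (hy : 0 ≤ y) (hy' : y ≤ 1 / 2) : y ≤ Real.sin (π * y) := by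
    calc y ≤ 2 / π * (π * y) := by
          rw [← mul_assoc, div_mul_cancel₀ _ Real.pi_ne_zero]
          linarith
      _ ≤ Real.sin (π * y) := Real.mul_le_sin (by positivity) (by nlinarith [Real.pi_pos])
  rcases le_total x (1 / 2) with hx | hx
  · exact hleft.trans (hhalf (hδ.trans hleft) hx)
  · rw [← Real.sin_pi_sub, ← mul_one_sub]
    exact (le_sub_comm.1 hright).trans (hhalf (by linarith) (by linarith))

lemma clampSin_apply_of_mem_Icc {δ : ℝ} (hδ : 0 < δ) {k : ℕ} {x : ℝ}
    (hx : x ∈ Set.Icc (k + δ) (k + 1 - δ)) :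
    clampSin δ⁻¹ (x : AddCircle (2 : ℝ)) = (-1) ^ k := by
  have him : (fourier 1 (x : AddCircle (2 : ℝ))).im = (-1) ^ k * Real.sin (π * (x - k)) := by
    rw [fourier_two_apply, Circle.coe_exp, Complex.exp_ofReal_mul_I_im, ← Real.sin_add_nat_mul_pi]
    congr 1
    push_cast
    ring
  have hsin : 1 ≤ δ⁻¹ * Real.sin (π * (x - k)) := by
    rw [le_inv_mul_iff₀ hδ, mul_one]
    exact le_sin_pi_mul hδ.le (by linarith [hx.1]) (by linarith [hx.2])
  rw [clampSin, ContinuousMap.coe_mk, him]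
  rcases k.even_or_odd with hk | hk
  · rw [hk.neg_one_pow, hk.neg_one_pow, one_mul, min_eq_left hsin, max_eq_right (by norm_num),
      Complex.ofReal_one]
  · rw [hk.neg_one_pow, hk.neg_one_pow, min_eq_right (by linarith), max_eq_left (by linarith),
      Complex.ofReal_neg, Complex.ofReal_one]

end Wave

/-! ### The separating sequence -/

section NearSquare

/-- The position of `n` in the block `[k², (k + 1)²)` containing it is within `q` of one of the
endpoints of the block. -/
def NearSquare (q n : ℕ) : Prop :=
  n < n.sqrt ^ 2 + q ∨ (n.sqrt + 1) ^ 2 ≤ n + q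

instance (q : ℕ) : DecidablePred (NearSquare q) :=
  fun n => inferInstanceAs (Decidable (n < n.sqrt ^ 2 + q ∨ (n.sqrt + 1) ^ 2 ≤ n + q))

lemma card_nearSquare_le (q N : ℕ) :
    #{n ∈ Icc 1 N | NearSquare q n} ≤ 2 * q * (N.sqrt + 1) := by
  set S := {n ∈ Icc 1 N | NearSquare q n}
  have himage : #(S.image Nat.sqrt) ≤ N.sqrt + 1 := by
    rw [← card_range (N.sqrt + 1)]
    refine card_le_card (image_subset_iff.2 fun n hn => mem_range_succ_iff.2 ?_)
    exact Nat.sqrt_le_sqrt (mem_Icc.1 (mem_filter.1 hn).1).2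
  refine (card_le_mul_card_image S (2 * q) fun k _ => ?_).trans (Nat.mul_le_mul_left _ himage)
  have hblock : {n ∈ S | n.sqrt = k} ⊆
      Ico (k ^ 2) (k ^ 2 + q) ∪ Ico ((k + 1) ^ 2 - q) ((k + 1) ^ 2) := by
    intro n hn
    obtain ⟨hnS, rfl⟩ := mem_filter.1 hn
    have hlower := n.sqrt_le'
    have hupper := n.lt_succ_sqrt'
    rw [mem_union, mem_Ico, mem_Ico]
    exact (mem_filter.1 hnS).2.imp (⟨hlower, ·⟩) fun hnear => ⟨by omega, hupper⟩
  have hcard := (card_le_card hblock).trans (card_union_le _ _)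
  rw [Nat.card_Ico, Nat.card_Ico] at hcard
  omega

lemma sqrt_mem_Icc_of_not_nearSquare {q n : ℕ} (hn : ¬NearSquare q n) {δ : ℝ} (hδ₀ : 0 ≤ δ)
    (hδ₁ : δ ≤ 1) (hq : 2 * δ * (n.sqrt + 1) ≤ q) :
    √(n : ℝ) ∈ Set.Icc (n.sqrt + δ) (n.sqrt + 1 - δ) := by
  obtain ⟨hleft, hright⟩ := not_or.1 hn
  have hleft : (n.sqrt : ℝ) ^ 2 + q ≤ n := by exact_mod_cast not_lt.1 hleft
  have hright : (n : ℝ) + q < (n.sqrt + 1) ^ 2 := by exact_mod_cast not_le.1 hright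
  exact ⟨Real.le_sqrt_of_sq_le (by nlinarith), Real.sqrt_le_iff.2 ⟨by linarith, by nlinarith⟩⟩

lemma tendsto_sqrt_add_one_div : Tendsto (fun N : ℕ => ((N.sqrt : ℝ) + 1) / N) atTop (𝓝 0) := by
  have hbound : Tendsto (fun N : ℕ => 1 / √(N : ℝ) + 1 / N) atTop (𝓝 0) := by
    simpa using (tendsto_inv_atTop_zero.comp
      (Real.tendsto_sqrt_atTop.comp tendsto_natCast_atTop_atTop)).add
        (tendsto_inv_atTop_nhds_zero_nat (𝕜 := ℝ))
  refine squeeze_zero (fun N => by positivity) (fun N => ?_) hbound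
  rw [add_div, ← Real.sqrt_div_self']
  gcongr
  exact Real.nat_sqrt_le_real_sqrt

lemma tendsto_average_zero_of_not_nearSquare {u : ℕ → ℂ} {q : ℕ} {B : ℝ} (hB : ∀ n, ‖u n‖ ≤ B)
    (hu : ∀ n, ¬NearSquare q n → u n = 0) :
    Tendsto (fun N : ℕ => (N : ℂ)⁻¹ * ∑ n ∈ Icc 1 N, u n) atTop (𝓝 0) := by
  have hB₀ : 0 ≤ B := (norm_nonneg _).trans (hB 0)
  have hsum (N : ℕ) : ‖∑ n ∈ Icc 1 N, u n‖ ≤ 2 * q * (N.sqrt + 1) * B := by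
    calc ‖∑ n ∈ Icc 1 N, u n‖ = ‖∑ n ∈ Icc 1 N with NearSquare q n, u n‖ := by
          rw [sum_filter_of_ne fun n _ => not_imp_comm.1 (hu n)]
      _ ≤ #{n ∈ Icc 1 N | NearSquare q n} * B := by
          rw [← nsmul_eq_mul]
          exact norm_sum_le_of_le _ (fun n _ => hB n) |>.trans_eq (sum_const B)
      _ ≤ 2 * q * (N.sqrt + 1) * B := by
          gcongr
          exact_mod_cast card_nearSquare_le q N
  have hbound := tendsto_sqrt_add_one_div.const_mul (2 * q * B)
  rw [mul_zero] at hbound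
  refine squeeze_zero_norm (fun N => ?_) hbound
  rw [norm_mul, norm_inv, Complex.norm_natCast]
  calc (N : ℝ)⁻¹ * ‖∑ n ∈ Icc 1 N, u n‖ ≤ (N : ℝ)⁻¹ * (2 * q * (N.sqrt + 1) * B) := by
        gcongr
        exact hsum N
    _ = 2 * q * B * ((N.sqrt + 1) / N) := by ring

end NearSquare

section SeparatingSequence

/-- The sequence equal to `(-1)^{n+k}` on each block `[k², (k + 1)²)`. -/
def separatingSeq (n : ℕ) : ℂ := (-1) ^ (n + n.sqrt)

lemma separatingSeq_eq (n k : ℕ) (hleft : k ^ 2 ≤ n) (hright : n < (k + 1) ^ 2) :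
    separatingSeq n = (-1) ^ (n + k) := by
  rw [separatingSeq, ← Nat.eq_sqrt'.2 ⟨hleft, hright⟩]

lemma norm_separatingSeq (n : ℕ) : ‖separatingSeq n‖ = 1 := by
  rw [separatingSeq, norm_pow, norm_neg, norm_one, one_pow]

lemma separatingSeq_cube_eq_one {n h₁ h₂ : ℕ} (hn : ¬NearSquare (h₁ + h₂) n) :
    separatingSeq (n + h₁ + h₂) * separatingSeq (n + h₁) * separatingSeq (n + h₂) *
      separatingSeq n = 1 := by
  have hlower := n.sqrt_le'
  have hupper : n + (h₁ + h₂) < (n.sqrt + 1) ^ 2 := not_le.1 (not_or.1 hn).2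
  rw [separatingSeq_eq (n + h₁ + h₂) n.sqrt (by omega) (by omega),
    separatingSeq_eq (n + h₁) n.sqrt (by omega) (by omega),
    separatingSeq_eq (n + h₂) n.sqrt (by omega) (by omega), separatingSeq,
    ← pow_add, ← pow_add, ← pow_add]
  exact Even.neg_one_pow ⟨2 * n + h₁ + h₂ + 2 * n.sqrt, by ring⟩

theorem tendsto_average_separatingSeq_cube (h₁ h₂ : ℕ) :
    Tendsto (fun N : ℕ => (N : ℂ)⁻¹ * ∑ n ∈ Icc 1 N, separatingSeq (n + h₁ + h₂) *
      separatingSeq (n + h₁) * separatingSeq (n + h₂) * separatingSeq n) atTop (𝓝 1) := by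
  set u : ℕ → ℂ := fun n => separatingSeq (n + h₁ + h₂) * separatingSeq (n + h₁) *
    separatingSeq (n + h₂) * separatingSeq n
  have hbound (n : ℕ) : ‖u n - 1‖ ≤ 1 + 1 :=
    norm_sub_le_of_le (by simp only [u, norm_mul, norm_separatingSeq, mul_one, le_refl])
      norm_one.le
  have hdev := tendsto_average_zero_of_not_nearSquare hbound
    fun n hn => sub_eq_zero.2 (separatingSeq_cube_eq_one hn)
  rw [← zero_add (1 : ℂ)]
  refine (hdev.add_const 1).congr' ?_
  filter_upwards [eventually_ne_atTop 0] with N hN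
  rw [sum_sub_distrib, sum_const, Nat.card_Icc, Nat.add_sub_cancel, nsmul_one, mul_sub,
    inv_mul_cancel₀ (Nat.cast_ne_zero.2 hN), sub_add_cancel]

lemma separatingSeq_succ_eq_wave {a b n q : ℕ} {δ : ℝ} (hδ₀ : 0 < δ) (hδ₁ : δ ≤ 1)
    (hq : 2 * δ * ((n + 1).sqrt + 1) ≤ q) (hn : ¬NearSquare q (n + 1)) (hab : n ∈ Ico a b) :
    separatingSeq (n + 1) = -(1 / 2) * wave a b (clampSin δ⁻¹) n := by
  have hx : √(n + 1 : ℝ) ∈ Set.Icc ((n + 1).sqrt + δ) ((n + 1).sqrt + 1 - δ) := by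
    exact_mod_cast sqrt_mem_Icc_of_not_nearSquare hn hδ₀.le hδ₁ hq
  have hx' : √(n + 1 : ℝ) + 1 ∈
      Set.Icc (((n + 1).sqrt + 1 : ℕ) + δ) (((n + 1).sqrt + 1 : ℕ) + 1 - δ) := by
    push_cast
    exact ⟨by linarith [hx.1], by linarith [hx.2]⟩
  rw [wave_apply, if_pos hab, clampSin_apply_of_mem_Icc hδ₀ hx, clampSin_apply_of_mem_Icc hδ₀ hx',
    separatingSeq]
  ring

lemma norm_separatingSeq_sub_wave_le_two (a b m n : ℕ) (M : ℝ) :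
    ‖separatingSeq m - -(1 / 2) * wave a b (clampSin M) n‖ ≤ 2 := by
  have hwave : ‖-(1 / 2) * wave a b (clampSin M) n‖ ≤ 1 := by
    have := (norm_wave_le a b (clampSin M) n).trans
      (mul_le_mul_of_nonneg_left (norm_clampSin_le_one M) zero_le_two)
    rw [norm_mul, norm_neg, norm_div, norm_one, Complex.norm_ofNat]
    linarith
  exact (norm_sub_le_of_le (norm_separatingSeq m).le hwave).trans (by norm_num)

lemma sum_norm_separatingSeq_sub_wave_le {a N q : ℕ} {δ : ℝ} (hδ₀ : 0 < δ) (hδ₁ : δ ≤ 1)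
    (hq : 2 * δ * (N.sqrt + 1) ≤ q) :
    ∑ n ∈ range N, ‖separatingSeq (n + 1) - -(1 / 2) * wave a N (clampSin δ⁻¹) n‖ ≤
      2 * (2 * q * (N.sqrt + 1) + a) := by
  have hpoint : ∀ n ∈ range N,
      ‖separatingSeq (n + 1) - -(1 / 2) * wave a N (clampSin δ⁻¹) n‖ ≤
        2 * ((if NearSquare q (n + 1) then 1 else 0) + if n ∈ range a then 1 else 0) := by
    intro n hn
    have hbound := norm_separatingSeq_sub_wave_le_two a N (n + 1) n δ⁻¹
    split_ifs with hnear hsmall hsmall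
    · linarith
    · linarith
    · linarith
    · have hsqrt : ((n + 1).sqrt : ℝ) ≤ N.sqrt :=
        Nat.cast_le.2 (Nat.sqrt_le_sqrt (mem_range.1 hn))
      have hmem : n ∈ Ico a N := mem_Ico.2 ⟨not_lt.1 (mt mem_range.2 hsmall), mem_range.1 hn⟩
      rw [← separatingSeq_succ_eq_wave hδ₀ hδ₁ (le_trans (by gcongr) hq) hnear hmem, sub_self,
        norm_zero, add_zero, mul_zero]
  have hnear : ∑ n ∈ range N, (if NearSquare q (n + 1) then (1 : ℝ) else 0) ≤
      2 * q * (N.sqrt + 1) := by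
    rw [range_eq_Ico, sum_Ico_add' (fun n => if NearSquare q n then (1 : ℝ) else 0), sum_boole]
    exact_mod_cast card_nearSquare_le q N
  have hsmall : ∑ n ∈ range N, (if n ∈ range a then (1 : ℝ) else 0) ≤ a := by
    rw [sum_ite_mem, sum_const, nsmul_one]
    exact_mod_cast (card_le_card inter_subset_right).trans (card_range a).le
  refine (sum_le_sum hpoint).trans ?_
  rw [← mul_sum, sum_add_distrib]
  gcongr

lemma exists_eventually_expect_norm_separatingSeq_sub_wave_le {η : ℝ} (hη : 0 < η) :
    ∃ M : ℝ, ∀ᶠ N : ℕ in atTop, 𝔼 x : ZMod (N + 1), ‖separatingSeq (x.val + 1) -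
      -(1 / 2) * wave (N + 1).sqrt (N + 1) (clampSin M) x.val‖ ≤ η := by
  set δ := min 1 (η / 64)
  have hδ₀ : 0 < δ := by positivity
  have hδη : δ ≤ η / 64 := min_le_right _ _
  have hsmall : ∀ᶠ N : ℕ in atTop, (((N + 1).sqrt : ℝ) + 1) / (N + 1 : ℕ) ≤ η / 12 :=
    (tendsto_sqrt_add_one_div.comp (tendsto_add_atTop_nat 1)).eventually_le_const (by positivity)
  refine ⟨δ⁻¹, hsmall.mono fun N hN => ?_⟩
  set K : ℝ := (N + 1).sqrt + 1
  have hK : 1 ≤ K := le_add_of_nonneg_left (Nat.cast_nonneg _)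
  have hN₀ : (1 : ℝ) ≤ (N + 1 : ℕ) := Nat.one_le_cast.2 N.succ_pos
  have hKsq : K ^ 2 ≤ 4 * (N + 1 : ℕ) := by
    have hsqrt : ((N + 1).sqrt : ℝ) ^ 2 ≤ (N + 1 : ℕ) := by exact_mod_cast (N + 1).sqrt_le'
    linarith [two_mul_le_add_sq ((N + 1).sqrt : ℝ) 1, add_sq ((N + 1).sqrt : ℝ) 1]
  have hq : (⌈2 * δ * K⌉₊ : ℝ) ≤ 2 * δ * K + 1 := (Nat.ceil_lt_add_one (by positivity)).le
  rw [Fintype.expect_eq_sum_div_card, ZMod.card, sum_zmod_val (N + 1) fun n =>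
    ‖separatingSeq (n + 1) - -(1 / 2) * wave (N + 1).sqrt (N + 1) (clampSin δ⁻¹) n‖,
    div_le_iff₀ (by positivity)]
  rw [div_le_iff₀ (by positivity)] at hN
  calc _ ≤ 2 * (2 * ⌈2 * δ * K⌉₊ * K + (N + 1).sqrt) :=
        sum_norm_separatingSeq_sub_wave_le hδ₀ (min_le_left _ _) (Nat.le_ceil _)
    _ ≤ 2 * (2 * (2 * δ * K + 1) * K + K) := by
        gcongr
        exact (lt_add_one _).le
    _ = 8 * δ * K ^ 2 + 6 * K := by ring
    _ ≤ 8 * (η / 64) * (4 * (N + 1 : ℕ)) + 6 * (η / 12 * (N + 1 : ℕ)) := by gcongr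
    _ = η * (N + 1 : ℕ) := by ring

theorem gowersNull_separatingSeq (s : ℕ) :
    GowersNull atTop s fun N => truncation (N + 1) fun n => separatingSeq (n + 1) := by
  have hdrift : Tendsto (fun N : ℕ => (N + 1).sqrt) atTop atTop :=
    tendsto_atTop.2 fun k => (eventually_ge_atTop (k ^ 2)).mono fun N hN =>
      Nat.le_sqrt'.2 (hN.trans N.le_succ)
  refine .of_succ (.of_approx (B := 2) fun η hη => ?_)
  obtain ⟨M, hM⟩ := exists_eventually_expect_norm_separatingSeq_sub_wave_le hη
  exact ⟨_, (gowersNull_wave_of_tendsto hdrift s (clampSin M)).const_smul (-(1 / 2)),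
    hM.mono fun N hN => ⟨fun x => norm_separatingSeq_sub_wave_le_two _ _ _ _ M, hN⟩⟩

end SeparatingSequence

end

/-- The separating example from the Remark after Theorem 1.7: there is a `±1`-valued
sequence `b`, namely `b(n) = (−1)^{n+k}` for `n ∈ [k², (k+1)²)`, such that the Gowers
norms of the truncations `b·1_{[N]}` (extended periodically to `ℤ_N`) tend to `0` for
every `s ≥ 1`, while the local uniformity seminorm satisfies `‖b‖_{U²(I)} = 1`, i.e.
`lim_{H₁,H₂} 𝔼_{h₁∈[H₁]} 𝔼_{h₂∈[H₂]} (lim_N 𝔼_{n∈[N]} b(n+h₁+h₂)b(n+h₁)b(n+h₂)b(n)) = 1`.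
-/
theorem separating_example_local_vs_gowers :
    ∃ b : ℕ → ℂ,
      (∀ n, b n = 1 ∨ b n = -1) ∧
      (∀ n k : ℕ, k ^ 2 ≤ n → n < (k + 1) ^ 2 → b n = (-1 : ℂ) ^ (n + k)) ∧
      (∀ s : ℕ, 1 ≤ s →
        Tendsto (fun N : ℕ => gowersNorm N s (fun n => b (n + 1))) atTop (𝓝 0)) ∧
      ∃ c : ℕ → ℕ → ℂ,
        (∀ h₁ h₂ : ℕ, Tendsto (fun N : ℕ => (N : ℂ)⁻¹ * ∑ n ∈ Finset.Icc 1 N,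
            b (n + h₁ + h₂) * b (n + h₁) * b (n + h₂) * b n) atTop (𝓝 (c h₁ h₂))) ∧
        Tendsto (fun H : ℕ => ((H : ℂ) ^ 2)⁻¹ *
            ∑ h₁ ∈ Finset.Icc 1 H, ∑ h₂ ∈ Finset.Icc 1 H, c h₁ h₂) atTop (𝓝 1) := by
  refine ⟨separatingSeq, fun n => neg_one_pow_eq_or ℂ _, separatingSeq_eq, fun s hs => ?_,
    fun _ _ => 1, tendsto_average_separatingSeq_cube, ?_⟩
  · obtain ⟨t, rfl⟩ := Nat.exists_eq_add_of_le' hs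
    exact (gowersNull_separatingSeq t).tendsto_gowersNorm
  · refine tendsto_const_nhds.congr' ?_
    filter_upwards [eventually_ne_atTop 0] with H hH
    have hH' : (H : ℂ) ≠ 0 := Nat.cast_ne_zero.2 hH
    simp only [sum_const, Nat.card_Icc, Nat.add_sub_cancel, nsmul_eq_mul, mul_one]
    rw [← sq, inv_mul_cancel₀ (pow_ne_zero 2 hH')]
end
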